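/- Let f : ℝ → ℝ be twice continuously differentiable with f'(0) ≥ 0 and with f'' Lipschitz continuous. Let ū : [0,∞) → ℝ be absolutely continuous with ū(0) = 0 and ū' ∈ L²([0,∞)). Then there exists a function u : [0,∞) × [0,∞) → ℝ such that: (a) u is locally Hölder continuous in (t,x); (b) u(0,x) = ū(x) for all x and u(t,0) = 0 for all t; (c) for each t ≥ 0 the map x ↦ u(t,x) is absolutely continuous with ∫₀^∞ u_x(t,x)² dx ≤ ∫₀^∞ ū'(x)² dx; (d) for every t ≥ 0 and almost every x ≥ 0, u(t,x) = ū(x) + ∫₀^t [ −f'(u(s,x))·u_x(s,x) + (1/2)∫₀^x f''(u(s,y))·u_x(s,y)² dy ] ds. -/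

import Mathlib

open MeasureTheory Set Real

namespace AVW
open Filter Topology

/-- Chain rule for a `C¹` function of an absolutely continuous function. -/
lemma chain_rule {F F' v v' : ℝ → ℝ} {a b : ℝ} (hF : ∀ x, HasDerivAt F (F' x) x)
    (hF' : Continuous F') (hv' : IntervalIntegrable v' volume a b)
    (hv : ∀ x ∈ uIcc a b, v x = v a + ∫ y in a..x, v' y) :
    IntervalIntegrable (fun x => F' (v x) * v' x) volume a b ∧
    F (v b) - F (v a) = ∫ x in a..b, F' (v x) * v' x := by
  set V : ℝ → ℝ := fun x => v a + ∫ y in a..x, v' y with hV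
  have hVac : AbsolutelyContinuousOnInterval V a b := by
    have h1 := hv'.absolutelyContinuousOnInterval_intervalIntegral (c := a) (by simp)
    rw [absolutelyContinuousOnInterval_iff] at h1 ⊢
    simpa [hV] using h1
  have hVc : ContinuousOn V (uIcc a b) := hVac.continuousOn
  have hFint : IntervalIntegrable (fun x => F' (V x) * v' x) volume a b :=
    hv'.continuousOn_mul (hF'.comp_continuousOn hVc)
  have hFVac : AbsolutelyContinuousOnInterval (fun x => F (V x)) a b := by
    obtain ⟨B, hB⟩ := isCompact_uIcc.exists_bound_of_continuousOn hVc
    obtain ⟨C, hC⟩ := (isCompact_Icc (a := -B) (b := B)).exists_bound_of_continuousOn hF'.continuousOn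
    have hmem : ∀ x ∈ uIcc a b, V x ∈ Icc (-B) B := fun x hx => abs_le.1 (hB x hx)
    have hlip : ∀ x ∈ uIcc a b, ∀ y ∈ uIcc a b, dist (F (V x)) (F (V y)) ≤ (|C|+1) * dist (V x) (V y) := by
      intro x hx y hy
      have := (convex_Icc (-B) B).norm_image_sub_le_of_norm_hasDerivWithin_le
        (f := F) (f' := F') (C := |C|+1) (fun z _ => (hF z).hasDerivWithinAt)
        (fun z hz => (hC z hz).trans (by linarith [le_abs_self C]))
        (hmem y hy) (hmem x hx)
      simpa [dist_eq_norm] using this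
    rw [absolutelyContinuousOnInterval_iff] at hVac ⊢
    intro ε hε
    obtain ⟨δ, hδ, h⟩ := hVac (ε / (|C|+1)) (by positivity)
    refine ⟨δ, hδ, fun E hE hlt => ?_⟩
    have h2 := h E hE hlt
    rw [lt_div_iff₀ (by positivity), mul_comm] at h2
    refine lt_of_le_of_lt ?_ h2
    rw [Finset.mul_sum]
    refine Finset.sum_le_sum fun i hi => ?_
    have := hE.1 i (by simpa using hi)
    exact hlip _ this.1 _ this.2
  have hae := hv'.ae_hasDerivAt_integral
  have hae2 := hFint.ae_hasDerivAt_integral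
  have hG := hFVac.sub (hFint.absolutelyContinuousOnInterval_intervalIntegral (c := a) (by simp))
  obtain ⟨c, hc⟩ := hG.const_of_ae_hasDerivAt_zero (by
    filter_upwards [hae, hae2] with x h1 h2 hx
    have h3 : HasDerivAt V (v' x) x := by
      simpa [hV] using (h1 hx a (by simp)).const_add (v a)
    have h4 := ((hF (V x)).comp x h3).sub (h2 hx a (by simp))
    simpa using! h4)
  have ha := hc a (by simp)
  have hb := hc b (by simp)
  have hVv : ∀ x ∈ uIcc a b, v x = V x := hv
  have hVa : V a = v a := by simp [hV]
  have e1 : ∀ x ∈ uIcc a b, F' (V x) * v' x = F' (v x) * v' x := fun x hx => by rw [hVv x hx]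
  refine ⟨hFint.congr fun x hx => e1 x (uIoc_subset_uIcc hx), ?_⟩
  rw [← intervalIntegral.integral_congr e1]
  simp only [Pi.sub_apply, intervalIntegral.integral_same, hVa] at ha hb
  rw [hVv b (by simp)]
  linarith

lemma param_cont {h : ℝ → ℝ → ℝ} (hh : Continuous fun p : ℝ × ℝ => h p.1 p.2) {ρ : ℝ → ℝ}
    (hρ : ∀ a b, IntervalIntegrable ρ volume a b) :
    Continuous fun p : ℝ × ℝ => ∫ η in (0:ℝ)..p.2, h p.1 η * ρ η := by
  rw [continuous_iff_continuousAt]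
  rintro ⟨t, b⟩
  have hK : IsCompact (Icc (t-1) (t+1) ×ˢ Icc (-|b|-1) (|b|+1)) := isCompact_Icc.prod isCompact_Icc
  obtain ⟨C, hC⟩ := hK.exists_bound_of_continuousOn hh.continuousOn
  have hu : uIoc (-|b|-1) (|b|+1) ⊆ Icc (-|b|-1) (|b|+1) := by
    rw [uIoc_of_le (by linarith [abs_nonneg b])]; exact Ioc_subset_Icc_self
  refine intervalIntegral.continuousAt_parametric_primitive_of_dominated
    (F := fun s η => h s η * ρ η) (fun η => C * |ρ η|) (-|b|-1) (|b|+1) ?_ ?_ ((hρ _ _).norm.const_mul C) ?_ ?_ ?_ (by simp)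
  · intro s
    have h1 : Continuous (fun η => h s η) := hh.comp (Continuous.prodMk continuous_const continuous_id)
    exact h1.aestronglyMeasurable.mul
      (intervalIntegrable_iff.1 (hρ (-|b|-1) (|b|+1))).aestronglyMeasurable
  · filter_upwards [Icc_mem_nhds (show t - 1 < t by linarith) (show t < t+1 by linarith)] with s hs
    refine (ae_restrict_iff' measurableSet_uIoc).2 (ae_of_all _ fun η hη => ?_)
    rw [norm_mul]
    exact mul_le_mul_of_nonneg_right (hC (s, η) ⟨hs, hu hη⟩) (norm_nonneg _)
  · refine ae_of_all _ fun η => ?_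
    have h1 : Continuous (fun s => h s η) := hh.comp (Continuous.prodMk continuous_id continuous_const)
    exact (h1.mul continuous_const).continuousAt
  · constructor <;> linarith [abs_nonneg b]
  · constructor <;> linarith [le_abs_self b, neg_abs_le b]

lemma null_zeros {φ ψ : ℝ → ℝ} (h : ∀ s, HasDerivAt φ (ψ s) s) :
    volume {s | φ s = 0 ∧ ψ s ≠ 0} = 0 := by
  set S : Set ℝ := {s | φ s = 0 ∧ ψ s ≠ 0} with hS
  have hc := countable_setOfPred_isolated_right_within (s := S)
  have : {x ∈ S | 𝓝[S ∩ Ioi x] x = ⊥} = S := by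
    ext x
    simp only [Set.mem_ofPred_eq, and_iff_left_iff_imp]
    intro hx
    have h1 := (h x).eventually_ne (c := 0) hx.2
    rw [← empty_mem_iff_bot]
    have h2 : {z | φ z ≠ 0} ∈ 𝓝[S ∩ Ioi x] x :=
      nhdsWithin_mono x (fun z hz => ne_of_gt hz.2) h1
    filter_upwards [h2, self_mem_nhdsWithin] with z hz hz2
    exact hz hz2.1.1
  rw [this] at hc
  exact hc.measure_zero _

lemma ae_zero {D : ℝ → ℝ} (hD : ∀ x, 0 ≤ x → IntervalIntegrable D volume 0 x)
    (h0 : ∀ x, 0 ≤ x → ∫ y in (0:ℝ)..x, D y = 0) :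
    ∀ᵐ x ∂(volume.restrict (Ici (0:ℝ))), D x = 0 := by
  rw [ae_restrict_iff' measurableSet_Ici]
  have h1 : ∀ᵐ x : ℝ, ∀ n : ℕ, x ∈ uIcc (0:ℝ) n → ∀ c ∈ uIcc (0:ℝ) n,
      HasDerivAt (fun x => ∫ (t : ℝ) in c..x, D t) (D x) x :=
    ae_all_iff.2 fun n => (hD n (Nat.cast_nonneg n)).ae_hasDerivAt_integral
  have h2 : ∀ᵐ x : ℝ, x ≠ 0 := by simp [ae_iff, measure_singleton]
  filter_upwards [h1, h2] with x hx hx0 hx1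
  obtain ⟨n, hn⟩ := exists_nat_ge x
  have hxpos : 0 < x := lt_of_le_of_ne hx1 hx0.symm
  have h3 := hx n (by rw [uIcc_of_le (Nat.cast_nonneg n)]; exact ⟨hx1, hn⟩) 0 (by simp)
  have h4 : HasDerivAt (fun x => ∫ (t : ℝ) in (0:ℝ)..x, D t) 0 x := by
    refine (hasDerivAt_const x (0:ℝ)).congr_of_eventuallyEq ?_
    filter_upwards [Ioi_mem_nhds hxpos] with z hz
    exact h0 z (le_of_lt hz)
  exact h3.unique h4

lemma moving {u : ℝ → ℝ → ℝ} (hu : Continuous fun p : ℝ × ℝ => u p.1 p.2) {φ : ℝ → ℝ} {φ' t : ℝ}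
    (hφ : HasDerivAt φ φ' t) :
    HasDerivAt (fun s => ∫ x in (φ t)..(φ s), u s x) (φ' * u t (φ t)) t := by
  have hui : ∀ s a b, IntervalIntegrable (u s) volume a b := fun s a b =>
    (hu.comp (Continuous.prodMk continuous_const continuous_id)).intervalIntegrable a b
  have h1 : HasDerivAt (fun s => (φ s - φ t) * u t (φ t)) (φ' * u t (φ t)) t :=
    (hφ.sub_const _).mul_const _
  have h2 : (fun s => ∫ x in (φ t)..(φ s), (u s x - u t (φ t))) =o[𝓝 t] fun s => s - t := by
    have hO : (fun s => φ s - φ t) =O[𝓝 t] fun s => s - t := hφ.isBigO_sub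
    refine Asymptotics.IsLittleO.trans_isBigO ?_ hO
    rw [Asymptotics.isLittleO_iff]
    intro c hc
    have h3 : ∀ᶠ p : ℝ × ℝ in 𝓝 (t, φ t), |u p.1 p.2 - u t (φ t)| < c := by
      have := (Metric.continuousAt_iff'.1 (hu.continuousAt (x := (t, φ t)))) c hc
      simpa [Real.dist_eq] using this
    rw [Metric.eventually_nhds_iff] at h3
    obtain ⟨δ, hδ, h3⟩ := h3
    filter_upwards [Metric.ball_mem_nhds t hδ, hφ.continuousAt (Metric.ball_mem_nhds (φ t) hδ)] with s hs1 hs2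
    refine intervalIntegral.norm_integral_le_of_norm_le_const fun x hx => ?_
    rw [Real.norm_eq_abs]
    refine (h3 (y := (s, x)) ?_).le
    rw [Prod.dist_eq, max_lt_iff]
    refine ⟨hs1, lt_of_le_of_lt ?_ (show dist (φ s) (φ t) < δ from hs2)⟩
    have := uIoc_subset_uIcc hx
    simp only [Real.dist_eq]
    exact abs_sub_left_of_mem_uIcc this
  have h4 := h1.add (f' := φ' * u t (φ t)) (g' := 0) (g := fun s => ∫ x in (φ t)..(φ s), (u s x - u t (φ t))) (by
    rw [hasDerivAt_iff_isLittleO]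
    simpa using h2)
  rw [add_zero] at h4
  refine h4.congr_of_eventuallyEq (Eventually.of_forall fun s => ?_)
  simp only [Pi.add_apply]
  rw [intervalIntegral.integral_sub (hui _ _ _) (by simp)]
  simp

lemma cauchy_schwarz {p q : ℝ → ℝ} {a b : ℝ} (hab : a ≤ b)
    (hp : IntervalIntegrable (fun x => p x ^ 2) volume a b)
    (hq : IntervalIntegrable (fun x => q x ^ 2) volume a b)
    (hpq : IntervalIntegrable (fun x => p x * q x) volume a b) :
    (∫ x in a..b, p x * q x) ^ 2 ≤ (∫ x in a..b, p x ^ 2) * ∫ x in a..b, q x ^ 2 := by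
  have key : ∀ l : ℝ, 0 ≤ (∫ x in a..b, q x ^ 2) * (l * l) + (2 * ∫ x in a..b, p x * q x) * l
      + ∫ x in a..b, p x ^ 2 := by
    intro l
    have h1 : 0 ≤ ∫ x in a..b, (p x + l * q x) ^ 2 :=
      intervalIntegral.integral_nonneg hab fun x _ => sq_nonneg _
    have h2 : ∀ x, (p x + l * q x) ^ 2 = p x ^ 2 + ((2 * l) * (p x * q x) + (l * l) * q x ^ 2) := by
      intro x; ring
    simp_rw [h2] at h1
    rw [intervalIntegral.integral_add hp ((hpq.const_mul _).add (hq.const_mul _)),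
      intervalIntegral.integral_add (hpq.const_mul _) (hq.const_mul _),
      intervalIntegral.integral_const_mul, intervalIntegral.integral_const_mul] at h1
    linarith
  have := discrim_le_zero key
  unfold discrim at this
  nlinarith

lemma sublinear {w : ℝ → ℝ} (hw2 : Integrable (fun x => w x ^ 2)) {ε : ℝ}
    (hε : 0 < ε) (hloc : ∀ a b, IntervalIntegrable w volume a b) :
    ∃ K : ℝ, ∀ x, 0 ≤ x → (∫ y in (0:ℝ)..x, |w y|) ^ 2 ≤ K + ε * x := by
  have ht := intervalIntegral_tendsto_integral_Ioi (0:ℝ) (hw2.integrableOn) tendsto_id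
  have ha : ∀ a b, IntervalIntegrable (fun y => |w y|) volume a b := fun a b => (hloc a b).abs
  obtain ⟨R, hR, hR0⟩ := ((ht.eventually (lt_mem_nhds (show (∫ x in Ioi (0:ℝ), w x ^ 2) - ε/2 < _ by linarith))).and
    (eventually_ge_atTop 0)).exists
  refine ⟨2 * (∫ y in (0:ℝ)..R, |w y|) ^ 2, fun x hx => ?_⟩
  have h2i : ∀ a b, IntervalIntegrable (fun y => w y ^ 2) volume a b := fun a b => hw2.intervalIntegrable
  rcases le_total x R with h | h
  · have h1 : ∫ y in (0:ℝ)..x, |w y| ≤ ∫ y in (0:ℝ)..R, |w y| := by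
      rw [← intervalIntegral.integral_add_adjacent_intervals (ha 0 x) (ha x R)]
      linarith [intervalIntegral.integral_nonneg h (f := fun y => |w y|) (μ := volume) fun y _ => abs_nonneg (w y)]
    have h0 : 0 ≤ ∫ y in (0:ℝ)..x, |w y| := intervalIntegral.integral_nonneg hx fun y _ => abs_nonneg (w y)
    have : 0 ≤ ε * x := by positivity
    nlinarith [pow_le_pow_left₀ h0 h1 2, sq_nonneg (∫ y in (0:ℝ)..R, |w y|)]
  · have h1 := cauchy_schwarz (p := fun y => |w y|) (q := fun _ => 1) h (by simpa using h2i R x) (by simp)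
      (by simpa using ha R x)
    simp only [mul_one, sq_abs, one_pow, intervalIntegral.integral_const, smul_eq_mul] at h1
    have h3 : ∫ y in R..x, w y ^ 2 ≤ ε / 2 := by
      have h4 : ∫ y in (0:ℝ)..x, w y ^ 2 ≤ ∫ y in Ioi (0:ℝ), w y ^ 2 := by
        rw [intervalIntegral.integral_of_le hx]
        exact setIntegral_mono_set hw2.integrableOn (ae_of_all _ fun y => sq_nonneg (w y))
          Ioc_subset_Ioi_self.eventuallyLE
      rw [← intervalIntegral.integral_add_adjacent_intervals (h2i 0 R) (h2i R x)] at h4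
      simp only [id] at hR
      linarith
    rw [← intervalIntegral.integral_add_adjacent_intervals (ha 0 R) (ha R x)]
    have h5 : (∫ y in R..x, |w y|) ^ 2 ≤ ε / 2 * x := by
      refine h1.trans ?_
      have : (∫ y in R..x, w y ^ 2) * (x - R) ≤ ε / 2 * (x - R) :=
        mul_le_mul_of_nonneg_right h3 (by linarith)
      nlinarith
    nlinarith [sq_nonneg ((∫ y in (0:ℝ)..R, |w y|) - ∫ y in R..x, |w y|)]

end AVW

namespace AVW
open Filter Topology

/-- Data of the problem: flux `f` with derivatives `g`, `k`, and the initial slope `w`. -/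
structure Dat where
  f : ℝ → ℝ
  g : ℝ → ℝ
  k : ℝ → ℝ
  w : ℝ → ℝ
  L : NNReal
  hfg : ∀ v, HasDerivAt f (g v) v
  hgk : ∀ v, HasDerivAt g (k v) v
  hk : LipschitzWith L k
  hg0 : 0 ≤ g 0
  hw : Measurable w
  hw0 : ∀ x, x ≤ 0 → w x = 0
  hw2 : Integrable (fun x => w x ^ 2)

namespace Dat
variable (D : Dat)

/-- total energy -/
noncomputable def E : ℝ := ∫ x, D.w x ^ 2
/-- initial datum -/
noncomputable def ub (x : ℝ) : ℝ := ∫ y in (0:ℝ)..x, D.w y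
/-- weight -/
noncomputable def m (x : ℝ) : ℝ := 1 + abs (∫ y in (0:ℝ)..x, |D.w y|)

lemma E_nonneg : 0 ≤ D.E := integral_nonneg fun _ => sq_nonneg _

lemma hwloc (a b : ℝ) : IntervalIntegrable D.w volume a b := by
  have h : IntervalIntegrable (fun x => 1 + D.w x ^ 2) volume a b :=
    (by simp : IntervalIntegrable (fun _ => (1:ℝ)) volume a b).add D.hw2.intervalIntegrable
  refine h.mono_fun D.hw.aestronglyMeasurable (ae_of_all _ fun x => ?_)
  simp only [Real.norm_eq_abs]
  rw [abs_of_nonneg (by positivity : 0 ≤ 1 + D.w x ^ 2), abs_le]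
  constructor <;> nlinarith [sq_nonneg (D.w x - 1), sq_nonneg (D.w x + 1)]

lemma hw2loc (a b : ℝ) : IntervalIntegrable (fun x => D.w x ^ 2) volume a b :=
  D.hw2.intervalIntegrable

lemma int_w2_le {a b : ℝ} (hab : a ≤ b) : ∫ x in a..b, D.w x ^ 2 ≤ D.E := by
  rw [intervalIntegral.integral_of_le hab]
  exact setIntegral_le_integral D.hw2 (ae_of_all _ fun y => sq_nonneg (D.w y))

lemma k_cont : Continuous D.k := D.hk.continuous
lemma g_cont : Continuous D.g := continuous_iff_continuousAt.2 fun x => (D.hgk x).continuousAt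
lemma f_cont : Continuous D.f := continuous_iff_continuousAt.2 fun x => (D.hfg x).continuousAt

lemma ub_cont : Continuous D.ub := intervalIntegral.continuous_primitive D.hwloc 0

lemma m_cont : Continuous D.m :=
  continuous_const.add (intervalIntegral.continuous_primitive (fun a b => (D.hwloc a b).abs) 0).abs

lemma one_le_m (x : ℝ) : 1 ≤ D.m x := by unfold m; linarith [abs_nonneg (∫ y in (0:ℝ)..x, |D.w y|)]

lemma ub_le_m (x : ℝ) : |D.ub x| ≤ D.m x := by
  have := intervalIntegral.norm_integral_le_abs_integral_norm (a := 0) (b := x) (f := D.w) (μ := volume)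
  simp only [Real.norm_eq_abs] at this
  unfold m ub; linarith

lemma m_mono {x y : ℝ} (hx : 0 ≤ x) (hxy : x ≤ y) : D.m x ≤ D.m y := by
  unfold m
  have h1 := (D.hwloc 0 x).abs
  have h2 := (D.hwloc x y).abs
  have h3 : 0 ≤ ∫ y in (0:ℝ)..x, |D.w y| := intervalIntegral.integral_nonneg hx fun y _ => abs_nonneg _
  have h4 : 0 ≤ ∫ y in x..y, |D.w y| := intervalIntegral.integral_nonneg hxy fun y _ => abs_nonneg _
  rw [← intervalIntegral.integral_add_adjacent_intervals h1 h2, abs_of_nonneg h3, abs_of_nonneg (by linarith)]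
  linarith

lemma int_neg_zero (h : ℝ → ℝ) {x : ℝ} (hx : x ≤ 0) (hh : ∀ y ≤ 0, h y = 0) : ∫ y in (0:ℝ)..x, h y = 0 := by
  rw [intervalIntegral.integral_zero_ae]
  refine ae_of_all _ fun y hy => ?_
  rw [uIoc_of_ge hx] at hy
  exact hh y hy.2

/-- the integral operator -/
noncomputable def op (h : ℝ → ℝ → ℝ) (t x : ℝ) : ℝ :=
  (1/2) * ∫ s in (0:ℝ)..t, ∫ η in (0:ℝ)..x, h s η * D.w η ^ 2

lemma inner_cont {h : ℝ → ℝ → ℝ} (hh : Continuous fun p : ℝ × ℝ => h p.1 p.2) :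
    Continuous fun p : ℝ × ℝ => ∫ η in (0:ℝ)..p.2, h p.1 η * D.w η ^ 2 :=
  param_cont hh D.hw2loc

lemma op_cont {h : ℝ → ℝ → ℝ} (hh : Continuous fun p : ℝ × ℝ => h p.1 p.2) :
    Continuous fun p : ℝ × ℝ => D.op h p.1 p.2 := by
  unfold op
  refine continuous_const.mul ?_
  have := intervalIntegral.continuous_parametric_intervalIntegral_of_continuous (μ := volume) (a₀ := 0)
    (f := fun (p : ℝ × ℝ) (s : ℝ) => ∫ η in (0:ℝ)..p.2, h s η * D.w η ^ 2)
    (s := fun p => p.1) ?_ continuous_fst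
  · exact this
  · exact (D.inner_cont hh).comp (Continuous.prodMk continuous_snd (continuous_snd.comp continuous_fst))

lemma inner_int {h : ℝ → ℝ → ℝ} (hh : Continuous fun p : ℝ × ℝ => h p.1 p.2) (s a b : ℝ) :
    IntervalIntegrable (fun η => h s η * D.w η ^ 2) volume a b :=
  (D.hw2loc a b).continuousOn_mul
    (hh.comp (Continuous.prodMk continuous_const continuous_id)).continuousOn

lemma op_sub {h h' : ℝ → ℝ → ℝ} (hh : Continuous fun p : ℝ × ℝ => h p.1 p.2)
    (hh' : Continuous fun p : ℝ × ℝ => h' p.1 p.2) (t x : ℝ) :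
    D.op h t x - D.op h' t x = D.op (fun s η => h s η - h' s η) t x := by
  unfold op
  rw [← mul_sub, ← intervalIntegral.integral_sub]
  · congr 1
    refine intervalIntegral.integral_congr fun s _ => ?_
    simp only
    rw [← intervalIntegral.integral_sub (D.inner_int hh s 0 x) (D.inner_int hh' s 0 x)]
    simp_rw [sub_mul]
  · exact ((D.inner_cont hh).comp (Continuous.prodMk continuous_id continuous_const)).intervalIntegrable _ _
  · exact ((D.inner_cont hh').comp (Continuous.prodMk continuous_id continuous_const)).intervalIntegrable _ _

lemma outer_bound {q : ℝ → ℝ} {M l : ℝ} (hl : 0 < l) (hM : 0 ≤ M)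
    (hq : ∀ s, |q s| ≤ M * exp (l * |s|)) (t : ℝ) : |∫ s in (0:ℝ)..t, q s| ≤ M * exp (l * |t|) / l := by
  have pos : ∀ (q : ℝ → ℝ) (t : ℝ), 0 ≤ t → (∀ s, |q s| ≤ M * exp (l * |s|)) →
      |∫ s in (0:ℝ)..t, q s| ≤ M * exp (l * |t|) / l := by
    intro q t ht hq
    have hi : IntervalIntegrable (fun s => M * exp (l * s)) volume 0 t :=
      (by fun_prop : Continuous fun s => M * exp (l * s)).intervalIntegrable _ _
    have h1 : ‖∫ s in (0:ℝ)..t, q s‖ ≤ ∫ s in (0:ℝ)..t, M * exp (l * s) := by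
      refine intervalIntegral.norm_integral_le_of_norm_le ht (ae_of_all _ fun s hs => ?_) hi
      have := hq s
      rwa [abs_of_pos hs.1] at this
    have h2 : ∫ s in (0:ℝ)..t, M * exp (l * s) = M * ((exp (l * t) - 1) / l) := by
      rw [intervalIntegral.integral_const_mul, intervalIntegral.integral_comp_mul_left (fun x => exp x) hl.ne']
      simp only [mul_zero, integral_exp, exp_zero, smul_eq_mul]
      ring
    rw [h2] at h1
    rw [abs_of_nonneg ht]
    refine h1.trans ?_
    rw [mul_div_assoc]
    gcongr
    linarith
  rcases le_total 0 t with ht | ht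
  · exact pos q t ht hq
  · have := pos (fun s => q (-s)) (-t) (by linarith) (fun s => by simpa using hq (-s))
    rw [intervalIntegral.integral_comp_neg, neg_neg, neg_zero, intervalIntegral.integral_symm, abs_neg, abs_neg] at this
    exact this

lemma op_bound {h : ℝ → ℝ → ℝ} {B l : ℝ} (hh : Continuous fun p : ℝ × ℝ => h p.1 p.2) (hl : 0 < l) (hB : 0 ≤ B)
    (hb : ∀ s η, |h s η| ≤ B * (exp (l * |s|) * D.m η)) (t x : ℝ) :
    |D.op h t x| ≤ (1/2) * B * D.E / l * (exp (l * |t|) * D.m x) := by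
  have hm := D.one_le_m x
  have hE := D.E_nonneg
  have h1 : ∀ s, |∫ η in (0:ℝ)..x, h s η * D.w η ^ 2| ≤ (B * D.m x * D.E) * exp (l * |s|) := by
    intro s
    rcases le_total 0 x with hx | hx
    · have h2 : ‖∫ η in (0:ℝ)..x, h s η * D.w η ^ 2‖ ≤ ∫ η in (0:ℝ)..x, (B * (exp (l * |s|) * D.m x)) * D.w η ^ 2 := by
        refine intervalIntegral.norm_integral_le_of_norm_le hx (ae_of_all _ fun η hη => ?_)
          ((D.hw2loc 0 x).const_mul _)
        rw [norm_mul, Real.norm_eq_abs, Real.norm_eq_abs, abs_of_nonneg (sq_nonneg (D.w η))]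
        refine mul_le_mul_of_nonneg_right ((hb s η).trans ?_) (sq_nonneg _)
        have := D.m_mono hη.1.le hη.2
        gcongr
      rw [intervalIntegral.integral_const_mul] at h2
      refine h2.trans ?_
      have h3 := D.int_w2_le hx
      calc _ ≤ (B * (exp (l * |s|) * D.m x)) * D.E := by gcongr
        _ = _ := by ring
    · rw [int_neg_zero _ hx (fun y hy => by rw [D.hw0 y hy]; simp)]
      simp only [abs_zero]
      positivity
  have h2 := outer_bound hl (by positivity) h1 t
  unfold op
  rw [abs_mul, abs_of_pos (by norm_num : (0:ℝ) < 1/2)]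
  calc _ ≤ 1/2 * (B * D.m x * D.E * exp (l * |t|) / l) := by gcongr
    _ = _ := by ring

lemma k_bound (v : ℝ) : |D.k v| ≤ |D.k 0| + D.L * |v| := by
  have := D.hk.dist_le_mul v 0
  simp only [Real.dist_eq, sub_zero] at this
  have h2 := abs_sub_abs_le_abs_sub (D.k v) (D.k 0)
  linarith

theorem exists_U : ∃ U : ℝ → ℝ → ℝ, Continuous (fun p : ℝ × ℝ => U p.1 p.2) ∧
    (∀ t x, U t x = D.ub x + D.op (fun s η => D.k (U s η)) t x) ∧
    ∃ C l : ℝ, 0 ≤ C ∧ 0 ≤ l ∧ ∀ t x, |U t x| ≤ C * exp (l * |t|) * D.m x := by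
  set l : ℝ := D.L * D.E + 1 with hl
  have hE := D.E_nonneg
  have hL : (0:ℝ) ≤ D.L := D.L.2
  have hlpos : 0 < l := by positivity
  set om : ℝ × ℝ → ℝ := fun p => exp (l * |p.1|) * D.m p.2 with hom
  have om1 : ∀ p, 1 ≤ om p := by
    intro p
    have h1 : 1 ≤ exp (l * |p.1|) := one_le_exp (by positivity)
    have := D.one_le_m p.2
    nlinarith
  have omc : Continuous om := by
    have := D.m_cont
    fun_prop
  have omm : ∀ p, D.m p.2 ≤ om p := by
    intro p
    have h1 : 1 ≤ exp (l * |p.1|) := one_le_exp (by positivity)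
    have := D.one_le_m p.2
    simp only [hom]
    nlinarith
  let H : BoundedContinuousFunction (ℝ × ℝ) ℝ → ℝ → ℝ → ℝ := fun z s η => D.k (D.ub η + om (s, η) * z (s, η))
  have Hc : ∀ z, Continuous fun p : ℝ × ℝ => H z p.1 p.2 := by
    intro z
    have h1 := D.ub_cont
    have h2 := D.k_cont
    have h3 := z.continuous
    simp only [H]
    fun_prop
  have Hb : ∀ z : BoundedContinuousFunction (ℝ × ℝ) ℝ, ∀ s η, |H z s η| ≤ (|D.k 0| + D.L + D.L * ‖z‖) * (exp (l * |s|) * D.m η) := by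
    intro z s η
    have h1 := D.k_bound (D.ub η + om (s, η) * z (s, η))
    have h2 := abs_add_le (D.ub η) (om (s, η) * z (s, η))
    have h3 := (D.ub_le_m η).trans (omm (s, η))
    have h4 : |om (s, η) * z (s, η)| ≤ om (s, η) * ‖z‖ := by
      rw [abs_mul, abs_of_pos (by linarith [om1 (s, η)])]
      exact mul_le_mul_of_nonneg_left (z.norm_coe_le_norm _) (by linarith [om1 (s, η)])
    have h5 : |D.k 0| ≤ |D.k 0| * om (s, η) := le_mul_of_one_le_right (abs_nonneg _) (om1 _)
    have h6 : D.L * |D.ub η + om (s, η) * z (s, η)| ≤ D.L * (om (s, η) + om (s, η) * ‖z‖) :=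
      mul_le_mul_of_nonneg_left (by linarith) hL
    have : |H z s η| ≤ |D.k 0| * om (s, η) + D.L * (om (s, η) + om (s, η) * ‖z‖) := by
      simp only [H]; linarith
    refine this.trans (le_of_eq ?_)
    simp only [hom]; ring
  let T : BoundedContinuousFunction (ℝ × ℝ) ℝ → BoundedContinuousFunction (ℝ × ℝ) ℝ := fun z =>
    BoundedContinuousFunction.ofNormedAddCommGroup (fun p => D.op (H z) p.1 p.2 / om p)
      ((D.op_cont (Hc z)).div omc fun p => by linarith [om1 p])
      ((1/2) * (|D.k 0| + D.L + D.L * ‖z‖) * D.E / l) (by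
        intro p
        rw [norm_div, Real.norm_eq_abs, Real.norm_eq_abs, abs_of_pos (by linarith [om1 p] : 0 < om p),
          div_le_iff₀ (by linarith [om1 p] : 0 < om p)]
        exact D.op_bound (Hc z) hlpos (by positivity) (Hb z) p.1 p.2)
  have hT : ContractingWith (1/2) T := by
    refine ⟨by rw [← NNReal.coe_lt_coe]; norm_num, LipschitzWith.of_dist_le_mul fun z z' => ?_⟩
    rw [BoundedContinuousFunction.dist_le (by positivity)]
    intro p
    have e : T z p - T z' p = D.op (fun s η => H z s η - H z' s η) p.1 p.2 / om p := by
      rw [← D.op_sub (Hc z) (Hc z')]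
      simp only [T, BoundedContinuousFunction.coe_ofNormedAddCommGroup]
      ring
    rw [Real.dist_eq, e, abs_div, abs_of_pos (by linarith [om1 p] : 0 < om p),
          div_le_iff₀ (by linarith [om1 p] : 0 < om p)]
    have hb := D.op_bound (h := fun s η => H z s η - H z' s η) (B := D.L * dist z z') ((Hc z).sub (Hc z')) hlpos (by positivity) (by
      intro s η
      have h1 := D.hk.dist_le_mul (D.ub η + om (s, η) * z (s, η)) (D.ub η + om (s, η) * z' (s, η))
      have h2 : dist (D.ub η + om (s, η) * z (s, η)) (D.ub η + om (s, η) * z' (s, η)) ≤ om (s, η) * dist z z' := by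
        rw [Real.dist_eq, add_sub_add_left_eq_sub, ← mul_sub, abs_mul, abs_of_pos (by linarith [om1 (s, η)]), ← Real.dist_eq]
        exact mul_le_mul_of_nonneg_left (z.dist_coe_le_dist _) (by linarith [om1 (s, η)])
      rw [Real.dist_eq] at h1
      refine h1.trans ?_
      refine (mul_le_mul_of_nonneg_left h2 hL).trans (le_of_eq ?_)
      simp only [hom]; ring) p.1 p.2
    refine hb.trans ?_
    have h7 : D.L * D.E / l ≤ 1 := by rw [div_le_one hlpos]; linarith
    have h8 : 0 ≤ dist z z' * om p := mul_nonneg dist_nonneg (by linarith [om1 p])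
    calc _ = (1/2) * (D.L * D.E / l) * (dist z z' * om p) := by simp only [hom]; ring
      _ ≤ (1/2) * 1 * (dist z z' * om p) := by gcongr
      _ = _ := by push_cast; ring
  obtain ⟨z, hz⟩ : ∃ z, T z = z := ⟨_, hT.fixedPoint_isFixedPt⟩
  refine ⟨fun t x => D.ub x + om (t, x) * z (t, x), ?_, ?_, 1 + ‖z‖, l, by positivity, hlpos.le, ?_⟩
  · have h1 := D.ub_cont
    have h3 := z.continuous
    fun_prop
  · intro t x
    have h1 : T z (t, x) = z (t, x) := by rw [hz]
    have h2 : D.op (H z) t x / om (t, x) = z (t, x) := by rw [← h1]; rfl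
    have h3 : D.op (H z) t x = om (t, x) * z (t, x) := by
      rw [← h2, mul_div_cancel₀ _ (by linarith [om1 (t, x)] : om (t, x) ≠ 0)]
    simp only [add_right_inj]
    rw [← h3]
  · intro t x
    have h3 := (D.ub_le_m x).trans (omm (t, x))
    have h4 : |om (t, x) * z (t, x)| ≤ om (t, x) * ‖z‖ := by
      rw [abs_mul, abs_of_pos (by linarith [om1 (t, x)])]
      exact mul_le_mul_of_nonneg_left (z.norm_coe_le_norm _) (by linarith [om1 (t, x)])
    have h2 := abs_add_le (D.ub x) (om (t, x) * z (t, x))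
    refine (h2.trans (add_le_add h3 h4)).trans (le_of_eq ?_)
    simp only [hom]; ring

end Dat
end AVW

namespace AVW
open Filter Topology

/-- joint continuity of a curried function -/
def C2 (h : ℝ → ℝ → ℝ) : Prop := Continuous fun p : ℝ × ℝ => h p.1 p.2

lemma C2.left {h : ℝ → ℝ → ℝ} (hh : C2 h) (s : ℝ) : Continuous (h s) :=
  Continuous.comp (g := fun p : ℝ × ℝ => h p.1 p.2) hh (Continuous.prodMk continuous_const continuous_id)
lemma C2.right {h : ℝ → ℝ → ℝ} (hh : C2 h) (x : ℝ) : Continuous (fun s => h s x) :=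
  Continuous.comp (g := fun p : ℝ × ℝ => h p.1 p.2) hh (Continuous.prodMk continuous_id continuous_const)
lemma C2.mul {h h' : ℝ → ℝ → ℝ} (hh : C2 h) (hh' : C2 h') : C2 (fun s x => h s x * h' s x) :=
  Continuous.mul hh hh'
lemma C2.add {h h' : ℝ → ℝ → ℝ} (hh : C2 h) (hh' : C2 h') : C2 (fun s x => h s x + h' s x) :=
  Continuous.add hh hh'
lemma C2.const (c : ℝ) : C2 (fun _ _ => c) := continuous_const
lemma C2.comp {F : ℝ → ℝ} {h : ℝ → ℝ → ℝ} (hF : Continuous F) (hh : C2 h) : C2 (fun s x => F (h s x)) :=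
  Continuous.comp (g := F) hF hh

lemma C2.time_int {h : ℝ → ℝ → ℝ} (hh : C2 h) : C2 (fun t x => ∫ s in (0:ℝ)..t, h s x) := by
  have := intervalIntegral.continuous_parametric_intervalIntegral_of_continuous (μ := volume) (a₀ := 0)
    (f := fun (p : ℝ × ℝ) (s : ℝ) => h s p.2)
    (s := fun p => p.1) ?_ continuous_fst
  · exact this
  · exact Continuous.comp (g := fun p : ℝ × ℝ => h p.1 p.2) hh
      (Continuous.prodMk continuous_snd (continuous_snd.comp continuous_fst))

lemma C2.time_deriv {h : ℝ → ℝ → ℝ} (hh : C2 h) (t x : ℝ) :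
    HasDerivAt (fun t => ∫ s in (0:ℝ)..t, h s x) (h t x) t :=
  (hh.right x).integral_hasStrictDerivAt 0 t |>.hasDerivAt

lemma rect_int {h : ℝ → ℝ → ℝ} (hh : C2 h) {ρ : ℝ → ℝ}
    (hρ : ∀ a b, IntervalIntegrable ρ volume a b) (a b c d : ℝ) :
    IntegrableOn (fun p : ℝ × ℝ => h p.1 p.2 * ρ p.2) (uIoc a b ×ˢ uIoc c d) := by
  haveI : IsFiniteMeasure (volume.restrict (uIoc a b)) :=
    ⟨by rw [Measure.restrict_apply_univ]; exact measure_Ioc_lt_top⟩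
  have h1 : Integrable (fun p : ℝ × ℝ => ρ p.2)
      ((volume.restrict (uIoc a b)).prod (volume.restrict (uIoc c d))) :=
    Integrable.comp_snd (intervalIntegrable_iff.1 (hρ c d)) _
  rw [IntegrableOn, Measure.volume_eq_prod, ← Measure.prod_restrict]
  have hK : IsCompact (uIcc a b ×ˢ uIcc c d) := isCompact_uIcc.prod isCompact_uIcc
  obtain ⟨C, hC⟩ := hK.exists_bound_of_continuousOn hh.continuousOn
  refine h1.bdd_mul (c := C) hh.aestronglyMeasurable ?_
  rw [Measure.prod_restrict]
  refine (ae_restrict_iff' (measurableSet_uIoc.prod measurableSet_uIoc)).2 (ae_of_all _ fun p hp => ?_)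
  exact hC p ⟨uIoc_subset_uIcc hp.1, uIoc_subset_uIcc hp.2⟩

namespace Dat
variable (D : Dat)

/-- functions `h₀ + h₁ w + h₂ w²` with continuous coefficients -/
def Poly (H : ℝ → ℝ → ℝ) : Prop := ∃ h0 h1 h2 : ℝ → ℝ → ℝ, C2 h0 ∧ C2 h1 ∧ C2 h2 ∧
  ∀ s x, H s x = h0 s x * 1 + h1 s x * D.w x + h2 s x * D.w x ^ 2

variable {D}

lemma Poly.add {H H' : ℝ → ℝ → ℝ} (h : D.Poly H) (h' : D.Poly H') : D.Poly (fun s x => H s x + H' s x) := by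
  obtain ⟨a, b, c, ha, hb, hc, e⟩ := h
  obtain ⟨a', b', c', ha', hb', hc', e'⟩ := h'
  exact ⟨_, _, _, ha.add ha', hb.add hb', hc.add hc', fun s x => by simp only [e, e']; ring⟩

lemma Poly.mul {H q : ℝ → ℝ → ℝ} (hq : C2 q) (h : D.Poly H) : D.Poly (fun s x => q s x * H s x) := by
  obtain ⟨a, b, c, ha, hb, hc, e⟩ := h
  exact ⟨_, _, _, hq.mul ha, hq.mul hb, hq.mul hc, fun s x => by simp only [e]; ring⟩

lemma one_loc (a b : ℝ) : IntervalIntegrable (fun _ : ℝ => (1:ℝ)) volume a b := by simp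

lemma cmul_int {h ρ : ℝ → ℝ} (hh : Continuous h) (hρ : ∀ a b, IntervalIntegrable ρ volume a b) (a b : ℝ) :
    IntervalIntegrable (fun x => h x * ρ x) volume a b :=
  (hρ a b).continuousOn_mul hh.continuousOn

lemma Poly.int {H : ℝ → ℝ → ℝ} (h : D.Poly H) (s a b : ℝ) : IntervalIntegrable (H s) volume a b := by
  obtain ⟨h0, h1, h2, c0, c1, c2, e⟩ := h
  have : H s = fun x => h0 s x * 1 + h1 s x * D.w x + h2 s x * D.w x ^ 2 := funext (e s)
  rw [this]
  exact ((cmul_int (c0.left s) one_loc a b).add (cmul_int (c1.left s) D.hwloc a b)).add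
    (cmul_int (c2.left s) D.hw2loc a b)

lemma Poly.rect {H : ℝ → ℝ → ℝ} (h : D.Poly H) (a b c d : ℝ) :
    IntegrableOn (fun p : ℝ × ℝ => H p.1 p.2) (uIoc a b ×ˢ uIoc c d) := by
  obtain ⟨h0, h1, h2, c0, c1, c2, e⟩ := h
  simp_rw [e]
  exact ((rect_int c0 one_loc a b c d).add (rect_int c1 D.hwloc a b c d)).add
    (rect_int c2 D.hw2loc a b c d)

lemma Poly.swap {H : ℝ → ℝ → ℝ} (h : D.Poly H) (a b c d : ℝ) :
    ∫ s in a..b, ∫ x in c..d, H s x = ∫ x in c..d, ∫ s in a..b, H s x :=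
  intervalIntegral_intervalIntegral_swap (h.rect a b c d)

lemma Poly.cont {H : ℝ → ℝ → ℝ} (h : D.Poly H) : C2 (fun s x => ∫ η in (0:ℝ)..x, H s η) := by
  obtain ⟨h0, h1, h2, c0, c1, c2, e⟩ := h
  have e2 : (fun s x => ∫ η in (0:ℝ)..x, H s η) = fun s x =>
      ((∫ η in (0:ℝ)..x, h0 s η * 1) + ∫ η in (0:ℝ)..x, h1 s η * D.w η) + ∫ η in (0:ℝ)..x, h2 s η * D.w η ^ 2 := by
    funext s x
    rw [← intervalIntegral.integral_add (cmul_int (c0.left s) one_loc 0 x) (cmul_int (c1.left s) D.hwloc 0 x),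
      ← intervalIntegral.integral_add ((cmul_int (c0.left s) one_loc 0 x).add (cmul_int (c1.left s) D.hwloc 0 x))
        (cmul_int (c2.left s) D.hw2loc 0 x)]
    simp_rw [e]
  rw [e2]
  exact ((param_cont c0 one_loc).add (param_cont c1 D.hwloc)).add (param_cont c2 D.hw2loc)

lemma Poly.time_cont {H : ℝ → ℝ → ℝ} (h : D.Poly H) (x : ℝ) : Continuous (fun s => H s x) := by
  obtain ⟨h0, h1, h2, c0, c1, c2, e⟩ := h
  simp_rw [e]
  have := c0.right x; have := c1.right x; have := c2.right x
  fun_prop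

variable (D)

/-- Lagrangian velocity -/
noncomputable def U : ℝ → ℝ → ℝ := Classical.choose D.exists_U
lemma U_cont : C2 D.U := (Classical.choose_spec D.exists_U).1
lemma U_eq (t x : ℝ) : D.U t x = D.ub x + D.op (fun s η => D.k (D.U s η)) t x :=
  (Classical.choose_spec D.exists_U).2.1 t x
lemma U_growth : ∃ C l : ℝ, 0 ≤ C ∧ 0 ≤ l ∧ ∀ t x, |D.U t x| ≤ C * exp (l * |t|) * D.m x :=
  (Classical.choose_spec D.exists_U).2.2

lemma kU_cont : C2 (fun s x => D.k (D.U s x)) := D.U_cont.comp D.k_cont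
lemma gU_cont : C2 (fun s x => D.g (D.U s x)) := D.U_cont.comp D.g_cont

/-- time integral of the second derivative along U -/
noncomputable def A (t x : ℝ) : ℝ := ∫ s in (0:ℝ)..t, D.k (D.U s x)
lemma A_cont : C2 D.A := D.kU_cont.time_int
/-- square root of the Jacobian -/
noncomputable def a (t x : ℝ) : ℝ := 1 + (1/2) * D.w x * D.A t x
/-- energy source -/
noncomputable def P (t x : ℝ) : ℝ := ∫ η in (0:ℝ)..x, D.k (D.U t η) * D.w η ^ 2
/-- characteristics -/
noncomputable def y (t x : ℝ) : ℝ := x + ∫ s in (0:ℝ)..t, D.g (D.U s x)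

lemma poly_w2 : D.Poly (fun _ x => D.w x ^ 2) :=
  ⟨_, _, _, C2.const 0, C2.const 0, C2.const 1, fun s x => by ring⟩
lemma poly_wa : D.Poly (fun s x => D.w x * D.a s x) :=
  ⟨_, _, _, C2.const 0, C2.const 1, (C2.const (1/2)).mul D.A_cont, fun s x => by unfold a; ring⟩
lemma poly_a2 : D.Poly (fun s x => D.a s x ^ 2) :=
  ⟨_, _, _, C2.const 1, D.A_cont, ((C2.const (1/4)).mul D.A_cont).mul D.A_cont, fun s x => by unfold a; ring⟩

lemma P_cont : C2 D.P := (D.poly_w2.mul D.kU_cont).cont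

lemma a_deriv (t x : ℝ) : HasDerivAt (fun t => D.a t x) ((1/2) * D.w x * D.k (D.U t x)) t := by
  unfold a A
  exact ((D.kU_cont.time_deriv t x).const_mul _).const_add _

lemma U_eq2 (t x : ℝ) : D.U t x = ∫ η in (0:ℝ)..x, D.w η * D.a t η := by
  rw [U_eq, op, (D.poly_w2.mul D.kU_cont).swap, ub, ← intervalIntegral.integral_const_mul,
    ← intervalIntegral.integral_add (D.hwloc _ _)]
  · refine intervalIntegral.integral_congr fun η _ => ?_
    simp only [intervalIntegral.integral_mul_const]
    unfold a A; ring
  · simp_rw [intervalIntegral.integral_mul_const]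
    exact (cmul_int (D.A_cont.left t) D.hw2loc _ _).const_mul _

lemma U_deriv (t x : ℝ) : HasDerivAt (fun t => D.U t x) ((1/2) * D.P t x) t := by
  have : (fun t => D.U t x) = fun t => D.ub x + (1/2) * ∫ s in (0:ℝ)..t, D.P s x := by
    funext t; rw [U_eq]; rfl
  rw [this]
  exact ((D.P_cont.time_deriv t x).const_mul _).const_add _

lemma U_neg (t : ℝ) {x : ℝ} (hx : x ≤ 0) : D.U t x = 0 := by
  rw [U_eq2, int_neg_zero _ hx]
  intro y hy; rw [D.hw0 y hy]; ring

lemma P_neg (t : ℝ) {x : ℝ} (hx : x ≤ 0) : D.P t x = 0 := by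
  rw [P, int_neg_zero _ hx]
  intro y hy; rw [D.hw0 y hy]; ring

lemma U_sub (t x z : ℝ) : D.U t z - D.U t x = ∫ η in x..z, D.w η * D.a t η := by
  rw [U_eq2, U_eq2, intervalIntegral.integral_interval_sub_left] <;> exact D.poly_wa.int t _ _

lemma U_chain {F F' : ℝ → ℝ} (hF : ∀ x, HasDerivAt F (F' x) x) (hF' : Continuous F') (t x : ℝ) :
    F (D.U t x) - F 0 = ∫ η in (0:ℝ)..x, F' (D.U t η) * (D.w η * D.a t η) := by
  have := (chain_rule hF hF' (v := D.U t) (v' := fun η => D.w η * D.a t η) (D.poly_wa.int t 0 x)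
    (fun z _ => by rw [← D.U_sub]; ring)).2
  rwa [D.U_neg t le_rfl] at this

lemma y_cont : C2 D.y := Continuous.add continuous_snd D.gU_cont.time_int

lemma y_deriv (t x : ℝ) : HasDerivAt (fun t => D.y t x) (D.g (D.U t x)) t :=
  (D.gU_cont.time_deriv t x).const_add _

lemma y_eq (t x : ℝ) : D.y t x = D.g 0 * t + ∫ η in (0:ℝ)..x, D.a t η ^ 2 := by
  have h1 : ∀ s, D.g (D.U s x) = D.g 0 + ∫ η in (0:ℝ)..x, D.k (D.U s η) * (D.w η * D.a s η) := by
    intro s; rw [← D.U_chain D.hgk D.k_cont]; ring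
  have hp := D.poly_wa.mul D.kU_cont
  unfold y
  simp_rw [h1]
  rw [intervalIntegral.integral_add (by simp) ((hp.cont.right x).intervalIntegrable _ _), hp.swap]
  have h2 : ∀ η, ∫ s in (0:ℝ)..t, D.k (D.U s η) * (D.w η * D.a s η) = D.a t η ^ 2 - 1 := by
    intro η
    have h3 := intervalIntegral.integral_eq_sub_of_hasDerivAt (a := 0) (b := t) (f := fun s => D.a s η ^ 2)
      (f' := fun s => D.k (D.U s η) * (D.w η * D.a s η)) (fun s _ => by
        have := (D.a_deriv s η).pow 2
        convert! this using 1
        simp only [Nat.cast_ofNat]; ring) ((hp.time_cont η).intervalIntegrable _ _)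
    rw [h3]; simp [a, A]
  simp_rw [h2]
  rw [intervalIntegral.integral_sub (D.poly_a2.int t _ _) (by simp)]
  simp only [intervalIntegral.integral_const, smul_eq_mul]
  ring

lemma y_sub (t x z : ℝ) : D.y t z - D.y t x = ∫ η in x..z, D.a t η ^ 2 := by
  rw [y_eq, y_eq, add_sub_add_left_eq_sub, intervalIntegral.integral_interval_sub_left] <;>
    exact D.poly_a2.int t _ _

lemma y_mono (t : ℝ) : Monotone (D.y t) := by
  intro x z hxz
  have := intervalIntegral.integral_nonneg hxz (f := fun η => D.a t η ^ 2) (μ := volume) fun η _ => sq_nonneg _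
  rw [← D.y_sub] at this
  linarith

lemma y_neg (t : ℝ) {x : ℝ} (hx : x ≤ 0) : D.y t x = x + D.g 0 * t := by
  unfold y
  simp_rw [fun s => D.U_neg s hx]
  simp; ring

lemma U_sq' (t : ℝ) {x z : ℝ} (h : x ≤ z) : (D.U t z - D.U t x) ^ 2 ≤ D.E * (D.y t z - D.y t x) := by
  rw [U_sub, y_sub]
  refine (cauchy_schwarz h (D.hw2loc _ _) (D.poly_a2.int t _ _) (D.poly_wa.int t _ _)).trans ?_
  exact mul_le_mul_of_nonneg_right (D.int_w2_le h)
    (intervalIntegral.integral_nonneg h fun η _ => sq_nonneg _)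

lemma U_sq (t x z : ℝ) : (D.U t z - D.U t x) ^ 2 ≤ D.E * |D.y t z - D.y t x| := by
  rcases le_total x z with h | h
  · rw [abs_of_nonneg (sub_nonneg.2 (D.y_mono t h))]; exact D.U_sq' t h
  · rw [abs_sub_comm, abs_of_nonneg (sub_nonneg.2 (D.y_mono t h)), ← neg_sub, neg_sq]; exact D.U_sq' t h

lemma U_congr {t x z : ℝ} (h : D.y t x = D.y t z) : D.U t x = D.U t z := by
  have := D.U_sq t z x
  rw [h, sub_self, abs_zero, mul_zero] at this
  nlinarith

lemma proper (T X : ℝ) : ∃ R : ℝ, 0 ≤ R ∧ ∀ t x, |t| ≤ T → |D.y t x| ≤ X → |x| ≤ R := by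
  obtain ⟨C, l, hC, hl, hU⟩ := D.U_growth
  have hL : (0:ℝ) ≤ D.L := D.L.2
  set T' := |T| with hT'
  have hT0 : 0 ≤ T' := abs_nonneg T
  set B : ℝ := (|D.k 0| + D.L * (C * exp (l * T'))) * T' with hB
  have hB0 : 0 ≤ B := by positivity
  obtain ⟨K, hK⟩ := sublinear D.hw2 (ε := 1 / (4 * (B + 1))) (by positivity) D.hwloc
  have hAb : ∀ t x, |t| ≤ T → |D.A t x| ≤ B * D.m x := by
    intro t x ht
    have ht' : |t| ≤ T' := ht.trans (le_abs_self T)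
    have hm := D.one_le_m x
    have h1 : ‖D.A t x‖ ≤ ((|D.k 0| + D.L * (C * exp (l * T'))) * D.m x) * |t - 0| := by
      refine intervalIntegral.norm_integral_le_of_norm_le_const fun s hs => ?_
      have hs' : |s| ≤ T' := by
        have := abs_sub_left_of_mem_uIcc (uIoc_subset_uIcc hs)
        simp only [sub_zero] at this
        linarith
      have h2 := D.k_bound (D.U s x)
      have h3 : |D.U s x| ≤ C * exp (l * T') * D.m x := (hU s x).trans (by gcongr)
      have h4 : D.L * |D.U s x| ≤ D.L * (C * exp (l * T') * D.m x) := by gcongr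
      have h5 : |D.k 0| ≤ |D.k 0| * D.m x := le_mul_of_one_le_right (abs_nonneg _) hm
      rw [Real.norm_eq_abs]
      nlinarith
    rw [sub_zero, Real.norm_eq_abs] at h1
    refine h1.trans ?_
    calc _ ≤ (|D.k 0| + D.L * (C * exp (l * T'))) * D.m x * T' := by gcongr
      _ = _ := by rw [hB]; ring
  refine ⟨max (max (X + D.g 0 * T') (2 * (X + D.g 0 * T' + B * (2 + 2 * |K|)))) 0, le_max_right _ _, ?_⟩
  intro t x ht hyx
  have ht' : |t| ≤ T' := ht.trans (le_abs_self T)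
  have hgt : |D.g 0 * t| ≤ D.g 0 * T' := by
    rw [abs_mul, abs_of_nonneg D.hg0]; exact mul_le_mul_of_nonneg_left ht' D.hg0
  rw [abs_le] at hgt hyx
  rcases le_total x 0 with hx | hx
  · rw [D.y_neg t hx] at hyx
    refine le_trans ?_ (le_trans (le_max_left _ _) (le_max_left _ _))
    rw [abs_of_nonpos hx]; linarith
  · refine le_trans ?_ (le_trans (le_max_right _ _) (le_max_left _ _))
    rw [abs_of_nonneg hx]
    have h1 : x - B * D.m x * (∫ η in (0:ℝ)..x, |D.w η|) ≤ ∫ η in (0:ℝ)..x, D.a t η ^ 2 := by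
      have h2 : ∫ η in (0:ℝ)..x, (1 - B * D.m x * |D.w η|) ≤ ∫ η in (0:ℝ)..x, D.a t η ^ 2 := by
        refine intervalIntegral.integral_mono_on hx ((by simp : IntervalIntegrable (fun _ => (1:ℝ)) volume 0 x).sub
          ((D.hwloc 0 x).abs.const_mul _)) (D.poly_a2.int t _ _) fun η hη => ?_
        have h3 : |D.A t η| ≤ B * D.m x := (hAb t η ht).trans (by
          have := D.m_mono hη.1 hη.2
          gcongr)
        have h4 : |D.w η * D.A t η| ≤ B * D.m x * |D.w η| := by
          rw [abs_mul, mul_comm]; gcongr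
        have h5 := (abs_le.1 h4).1
        unfold a
        nlinarith [sq_nonneg (D.w η * D.A t η)]
      rw [intervalIntegral.integral_sub (by simp) ((D.hwloc 0 x).abs.const_mul _),
        intervalIntegral.integral_const_mul] at h2
      simpa using h2
    have h6 : 0 ≤ ∫ η in (0:ℝ)..x, |D.w η| := intervalIntegral.integral_nonneg hx fun η _ => abs_nonneg _
    have h7 : D.m x = 1 + ∫ η in (0:ℝ)..x, |D.w η| := by unfold m; rw [abs_of_nonneg h6]
    have h8 := hK x hx
    rw [D.y_eq] at hyx
    rw [h7] at h1
    set J := ∫ η in (0:ℝ)..x, |D.w η|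
    have h9 : (1 + J) * J ≤ 2 + 2 * J ^ 2 := by nlinarith [sq_nonneg (J - 1)]
    have h10 : B * (1 / (4 * (B + 1)) * x) ≤ x / 4 := by
      have : B * (1 / (4 * (B + 1))) ≤ 1 / 4 := by
        rw [mul_one_div, div_le_div_iff₀ (by positivity) (by positivity)]; linarith
      nlinarith
    have h11 : B * ((1 + J) * J) ≤ B * (2 + 2 * |K|) + x / 2 := by
      have : B * ((1 + J) * J) ≤ B * (2 + 2 * (|K| + 1 / (4 * (B + 1)) * x)) := by
        refine mul_le_mul_of_nonneg_left ?_ hB0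
        linarith [le_abs_self K]
      nlinarith
    nlinarith

/-- Lagrangian primitive of `u` -/
noncomputable def Rr (t x : ℝ) : ℝ := ∫ η in (0:ℝ)..x, D.U t η * D.a t η ^ 2
/-- Lagrangian primitive of the source -/
noncomputable def N (t x : ℝ) : ℝ := ∫ η in (0:ℝ)..x, D.P t η * D.a t η ^ 2
lemma N_cont : C2 D.N := (D.poly_a2.mul D.P_cont).cont

lemma Rr_deriv (t x : ℝ) : HasDerivAt (fun t => D.Rr t x)
    ((1/2) * D.N t x + (D.U t x * D.g (D.U t x) - (D.f (D.U t x) - D.f 0))) t := by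
  have p1 := (D.poly_a2.mul D.P_cont).mul (C2.const (1/2))
  have p2 := (D.poly_wa.mul (D.U_cont.mul D.kU_cont))
  have p := p1.add p2
  have e1 : ∀ t, D.Rr t x = D.Rr 0 x + ∫ s in (0:ℝ)..t, ∫ η in (0:ℝ)..x,
      (1/2 * (D.P s η * D.a s η ^ 2) + D.U s η * D.k (D.U s η) * (D.w η * D.a s η)) := by
    intro t
    rw [p.swap]
    have h2 : ∀ η, ∫ s in (0:ℝ)..t, (1/2 * (D.P s η * D.a s η ^ 2) + D.U s η * D.k (D.U s η) * (D.w η * D.a s η))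
        = D.U t η * D.a t η ^ 2 - D.U 0 η * D.a 0 η ^ 2 := by
      intro η
      refine intervalIntegral.integral_eq_sub_of_hasDerivAt (f := fun s => D.U s η * D.a s η ^ 2) (fun s _ => ?_)
        ((p.time_cont η).intervalIntegrable _ _)
      have := (D.U_deriv s η).mul ((D.a_deriv s η).pow 2)
      convert! this using 1
      simp only [Nat.cast_ofNat, Pi.pow_apply]; ring
    simp_rw [h2]
    rw [intervalIntegral.integral_sub ((D.poly_a2.mul D.U_cont).int t _ _) ((D.poly_a2.mul D.U_cont).int 0 _ _)]
    unfold Rr; ring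
  have e2 : (1/2) * D.N t x + (D.U t x * D.g (D.U t x) - (D.f (D.U t x) - D.f 0)) = ∫ η in (0:ℝ)..x,
      (1/2 * (D.P t η * D.a t η ^ 2) + D.U t η * D.k (D.U t η) * (D.w η * D.a t η)) := by
    rw [intervalIntegral.integral_add (p1.int t _ _) (p2.int t _ _), intervalIntegral.integral_const_mul]
    have h3 := D.U_chain (F := fun v => v * D.g v - (D.f v - D.f 0)) (F' := fun v => v * D.k v) (fun v => by
      have := ((hasDerivAt_id v).mul (D.hgk v)).sub ((D.hfg v).sub_const (D.f 0))
      convert! this using 1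
      simp) (continuous_id.mul D.k_cont) t x
    simp only [zero_mul, sub_self, sub_zero] at h3
    rw [← h3]; rfl
  rw [e2, funext e1]
  exact (p.cont.time_deriv t x).const_add _

end Dat
end AVW

namespace AVW
open Filter Topology
namespace Dat
variable (D : Dat)

/-- generalized inverse of the characteristic map -/
noncomputable def Z (t x : ℝ) : ℝ := sSup {ξ | D.y t ξ ≤ x}

lemma Z_bdd (t x : ℝ) : BddAbove {ξ | D.y t ξ ≤ x} := by
  obtain ⟨R, hR0, hR⟩ := D.proper |t| (max |x| |D.g 0 * t|)
  refine ⟨R, fun ξ hξ => ?_⟩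
  rcases le_total ξ 0 with h | h
  · linarith
  · have h1 := D.y_mono t h
    rw [D.y_neg t le_rfl, zero_add] at h1
    have h2 : D.y t ξ ≤ x := hξ
    refine (le_abs_self ξ).trans (hR t ξ le_rfl (abs_le.2 ⟨?_, ?_⟩))
    · have := neg_abs_le (D.g 0 * t)
      have := le_max_right |x| |D.g 0 * t|
      linarith
    · exact h2.trans ((le_abs_self x).trans (le_max_left _ _))

lemma Z_nonempty (t x : ℝ) : ({ξ | D.y t ξ ≤ x}).Nonempty := by
  refine ⟨min 0 (x - D.g 0 * t), ?_⟩
  show D.y t _ ≤ x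
  rw [D.y_neg t (min_le_left _ _)]
  linarith [min_le_right 0 (x - D.g 0 * t)]

lemma y_Z_le (t x : ℝ) : D.y t (D.Z t x) ≤ x := by
  have hc : IsClosed {ξ | D.y t ξ ≤ x} := isClosed_le (D.y_cont.left t) continuous_const
  exact hc.csSup_mem (D.Z_nonempty t x) (D.Z_bdd t x)

lemma le_Z {t x c : ℝ} : c ≤ D.Z t x ↔ D.y t c ≤ x :=
  ⟨fun h => (D.y_mono t h).trans (D.y_Z_le t x), fun h => le_csSup (D.Z_bdd t x) h⟩

lemma Z_lt {t x c : ℝ} : D.Z t x < c ↔ x < D.y t c := by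
  rw [← not_le, D.le_Z, not_le]

lemma y_Z (t x : ℝ) : D.y t (D.Z t x) = x := by
  refine le_antisymm (D.y_Z_le t x) ?_
  by_contra h
  push Not at h
  have h1 : ∀ᶠ c in 𝓝 (D.Z t x), D.y t c < x :=
    (D.y_cont.left t).continuousAt.eventually (gt_mem_nhds h)
  have h2 : ∀ᶠ c in 𝓝[>] (D.Z t x), D.y t c < x := h1.filter_mono nhdsWithin_le_nhds
  obtain ⟨c, hc, hc2⟩ := (h2.and self_mem_nhdsWithin).exists
  exact absurd (D.le_Z.2 hc.le) (not_le.2 hc2)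

lemma Z_meas : Measurable fun p : ℝ × ℝ => D.Z p.1 p.2 := by
  refine measurable_of_Iio fun c => ?_
  have : (fun p : ℝ × ℝ => D.Z p.1 p.2) ⁻¹' Iio c = {p | p.2 < D.y p.1 c} := by
    ext p; exact D.Z_lt
  rw [this]
  exact (isOpen_lt continuous_snd ((D.y_cont.right c).comp continuous_fst)).measurableSet

lemma Z_meas1 (t : ℝ) : Measurable (D.Z t) := D.Z_meas.comp measurable_prodMk_left

lemma a_meas : Measurable fun p : ℝ × ℝ => D.a p.1 p.2 := by
  unfold a
  have h1 : Measurable fun p : ℝ × ℝ => D.A p.1 p.2 := Continuous.measurable D.A_cont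
  have h2 : Measurable fun p : ℝ × ℝ => D.w p.2 := D.hw.comp measurable_snd
  exact ((h2.const_mul _).mul h1).const_add _

lemma a_meas1 (t : ℝ) : Measurable (D.a t) := D.a_meas.comp measurable_prodMk_left

lemma map_Z (t : ℝ) : Measure.map (D.Z t) volume =
    volume.withDensity (fun η => ENNReal.ofReal (D.a t η ^ 2)) := by
  have key : ∀ c d : ℝ, Measure.map (D.Z t) volume (Ico c d) = ENNReal.ofReal (D.y t d - D.y t c) := by
    intro c d
    rw [Measure.map_apply (D.Z_meas1 t) measurableSet_Ico]
    have : D.Z t ⁻¹' Ico c d = Ico (D.y t c) (D.y t d) := by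
      ext x; simp only [mem_preimage, mem_Ico, D.le_Z, D.Z_lt]
    rw [this, Real.volume_Ico]
  refine Measure.ext_of_Ico' _ _ (fun c d _ => ?_) fun c d hcd => ?_
  · rw [key]; exact ENNReal.ofReal_ne_top
  · rw [key, D.y_sub, withDensity_apply _ measurableSet_Ico, intervalIntegral.integral_of_le hcd.le,
      ofReal_integral_eq_lintegral_ofReal, setLIntegral_congr Ico_ae_eq_Ioc]
    · exact (intervalIntegrable_iff_integrableOn_Ioc_of_le hcd.le).1 (D.poly_a2.int t c d)
    · exact ae_of_all _ fun η => sq_nonneg _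

lemma dens_meas (t : ℝ) : Measurable (fun η => ENNReal.ofReal (D.a t η ^ 2)) :=
  ((D.a_meas1 t).pow_const 2).ennreal_ofReal

lemma cv_set (t : ℝ) {F : ℝ → ℝ} (hF : Measurable F) {s : Set ℝ} (hs : MeasurableSet s) :
    ∫ x in D.Z t ⁻¹' s, F (D.Z t x) = ∫ η in s, F η * D.a t η ^ 2 := by
  rw [← setIntegral_map hs hF.aestronglyMeasurable (D.Z_meas1 t).aemeasurable, D.map_Z,
    restrict_withDensity hs, integral_withDensity_eq_integral_toReal_smul (D.dens_meas t)
      (ae_of_all _ fun _ => ENNReal.ofReal_lt_top)]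
  refine integral_congr_ae (ae_of_all _ fun η => ?_)
  simp only [ENNReal.toReal_ofReal (sq_nonneg _), smul_eq_mul, mul_comm]

lemma cvi_set (t : ℝ) {F : ℝ → ℝ} (hF : Measurable F) {s : Set ℝ} (hs : MeasurableSet s) :
    IntegrableOn (fun x => F (D.Z t x)) (D.Z t ⁻¹' s) ↔ IntegrableOn (fun η => F η * D.a t η ^ 2) s := by
  have h := integrable_map_measure (μ := volume.restrict (D.Z t ⁻¹' s)) (f := D.Z t) (g := F)
    hF.aestronglyMeasurable (D.Z_meas1 t).aemeasurable
  rw [← Measure.restrict_map (D.Z_meas1 t) hs, D.map_Z, restrict_withDensity hs,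
    integrable_withDensity_iff (D.dens_meas t) (ae_of_all _ fun _ => ENNReal.ofReal_lt_top)] at h
  simp only [ENNReal.toReal_ofReal (sq_nonneg _)] at h
  exact h.symm

lemma pre_Ico (t c d : ℝ) : D.Z t ⁻¹' Ico c d = Ico (D.y t c) (D.y t d) := by
  ext x; simp only [mem_preimage, mem_Ico, D.le_Z, D.Z_lt]

lemma cv_le (t : ℝ) {F : ℝ → ℝ} (hF : Measurable F) {c d : ℝ} (hcd : c ≤ d) :
    ∫ x in (D.y t c)..(D.y t d), F (D.Z t x) = ∫ η in c..d, F η * D.a t η ^ 2 := by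
  rw [intervalIntegral.integral_of_le hcd, intervalIntegral.integral_of_le (D.y_mono t hcd),
    ← integral_Ico_eq_integral_Ioc, ← integral_Ico_eq_integral_Ioc, ← D.pre_Ico,
    D.cv_set t hF measurableSet_Ico]

lemma cv (t : ℝ) {F : ℝ → ℝ} (hF : Measurable F) (c d : ℝ) :
    ∫ x in (D.y t c)..(D.y t d), F (D.Z t x) = ∫ η in c..d, F η * D.a t η ^ 2 := by
  rcases le_total c d with h | h
  · exact D.cv_le t hF h
  · rw [intervalIntegral.integral_symm, D.cv_le t hF h, ← intervalIntegral.integral_symm]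

lemma cvi_le (t : ℝ) {F : ℝ → ℝ} (hF : Measurable F) {c d : ℝ} (hcd : c ≤ d)
    (h : IntervalIntegrable (fun η => F η * D.a t η ^ 2) volume c d) :
    IntervalIntegrable (fun x => F (D.Z t x)) volume (D.y t c) (D.y t d) := by
  rw [intervalIntegrable_iff_integrableOn_Ico_of_le (D.y_mono t hcd), ← D.pre_Ico, D.cvi_set t hF measurableSet_Ico]
  exact (intervalIntegrable_iff_integrableOn_Ico_of_le hcd).1 h

lemma cvi (t : ℝ) {F : ℝ → ℝ} (hF : Measurable F)
    (h : ∀ c d, IntervalIntegrable (fun η => F η * D.a t η ^ 2) volume c d) (x z : ℝ) :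
    IntervalIntegrable (fun x => F (D.Z t x)) volume x z := by
  rw [← D.y_Z t x, ← D.y_Z t z]
  rcases le_total (D.Z t x) (D.Z t z) with h' | h'
  · exact D.cvi_le t hF h' (h _ _)
  · exact (D.cvi_le t hF h' (h _ _)).symm

/-- for functions vanishing on the negative axis, integrals may start at `0` -/
lemma cv0 {t : ℝ} (ht : 0 ≤ t) {F : ℝ → ℝ} (hF : Measurable F) (hF0 : ∀ η ≤ 0, F η = 0)
    (h : ∀ c d, IntervalIntegrable (fun η => F η * D.a t η ^ 2) volume c d) (x : ℝ) :
    ∫ x in (0:ℝ)..x, F (D.Z t x) = ∫ η in (0:ℝ)..(D.Z t x), F η * D.a t η ^ 2 := by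
  have hc : -(D.g 0 * t) ≤ 0 := neg_nonpos.2 (mul_nonneg D.hg0 ht)
  have h0 : D.y t (-(D.g 0 * t)) = 0 := by rw [D.y_neg t hc]; ring
  have h1 := D.cv t hF (-(D.g 0 * t)) (D.Z t x)
  rw [h0, D.y_Z] at h1
  rw [h1, ← intervalIntegral.integral_add_adjacent_intervals (h (-(D.g 0 * t)) 0) (h _ _)]
  have h2 : ∫ η in (-(D.g 0 * t))..0, F η * D.a t η ^ 2 = 0 := by
    rw [intervalIntegral.integral_symm, int_neg_zero _ hc, neg_zero]
    intro η hη; rw [hF0 η hη, zero_mul]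
  rw [h2, zero_add]

/-- the solution -/
noncomputable def u (t x : ℝ) : ℝ := D.U t (D.Z t x)
/-- its spatial derivative -/
noncomputable def ux (t x : ℝ) : ℝ := D.w (D.Z t x) / D.a t (D.Z t x)

lemma u_y (t ξ : ℝ) : D.u t (D.y t ξ) = D.U t ξ := D.U_congr (D.y_Z t _)

lemma u_zero {t : ℝ} (ht : 0 ≤ t) : D.u t 0 = 0 := by
  have hc : -(D.g 0 * t) ≤ 0 := neg_nonpos.2 (mul_nonneg D.hg0 ht)
  have h0 : D.y t (-(D.g 0 * t)) = 0 := by rw [D.y_neg t hc]; ring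
  have h1 := D.u_y t (-(D.g 0 * t))
  rwa [h0, D.U_neg t hc] at h1

lemma u_init (x : ℝ) : D.u 0 x = D.ub x := by
  have h : D.y 0 x = x := by simp [y]
  rw [← h, D.u_y, h, D.U_eq]; simp [op]

lemma u_sq (t x z : ℝ) : (D.u t x - D.u t z) ^ 2 ≤ D.E * |x - z| := by
  have := D.U_sq t (D.Z t z) (D.Z t x)
  rwa [D.y_Z, D.y_Z] at this

lemma wdiv_meas (t : ℝ) : Measurable fun η => D.w η / D.a t η := D.hw.div (D.a_meas1 t)

lemma wdiv_mul (t η : ℝ) : D.w η / D.a t η * D.a t η ^ 2 = D.w η * D.a t η := by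
  by_cases h : D.a t η = 0
  · rw [h]; simp
  · field_simp

lemma wdiv_sq_le (t η : ℝ) : (D.w η / D.a t η) ^ 2 * D.a t η ^ 2 ≤ D.w η ^ 2 := by
  by_cases h : D.a t η = 0
  · rw [h]; simp; positivity
  · field_simp; rfl

lemma ux_loc (t x z : ℝ) : IntervalIntegrable (D.ux t) volume x z := by
  refine D.cvi t (D.wdiv_meas t) (fun c d => ?_) x z
  simp_rw [D.wdiv_mul]
  exact D.poly_wa.int t c d

lemma u_eq {t : ℝ} (ht : 0 ≤ t) (x : ℝ) : D.u t x = ∫ z in (0:ℝ)..x, D.ux t z := by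
  have h := D.cv0 ht (D.wdiv_meas t) (fun η hη => by rw [D.hw0 η hη, zero_div])
    (fun c d => by simp_rw [D.wdiv_mul]; exact D.poly_wa.int t c d) x
  simp_rw [D.wdiv_mul] at h
  rw [u, D.U_eq2, ← h]; rfl

lemma ux_sq_int (t : ℝ) : Integrable (fun x => D.ux t x ^ 2) := by
  have h := (D.cvi_set t ((D.wdiv_meas t).pow_const 2) MeasurableSet.univ).2 (by
    rw [integrableOn_univ]
    refine D.hw2.mono' (((D.wdiv_meas t).pow_const 2).mul ((D.a_meas1 t).pow_const 2)).aestronglyMeasurable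
      (ae_of_all _ fun η => ?_)
    rw [Real.norm_of_nonneg (by positivity)]
    exact D.wdiv_sq_le t η)
  rw [preimage_univ, integrableOn_univ] at h
  exact h

lemma ux_sq_le (t : ℝ) : ∫ x, D.ux t x ^ 2 ≤ D.E := by
  have h := D.cv_set t ((D.wdiv_meas t).pow_const 2) MeasurableSet.univ
  rw [preimage_univ, setIntegral_univ, setIntegral_univ] at h
  have h2 : ∫ x, D.ux t x ^ 2 = ∫ x, (D.w (D.Z t x) / D.a t (D.Z t x)) ^ 2 := rfl
  rw [h2, h]
  refine integral_mono_of_nonneg (ae_of_all _ fun η => by positivity) D.hw2 (ae_of_all _ fun η => D.wdiv_sq_le t η)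

lemma holder (T X : ℝ) : ∃ C : ℝ, 0 < C ∧ ∀ t x s z, |t| ≤ T → |x| ≤ X → |s| ≤ T → |z| ≤ X →
    |D.u t x - D.u s z| ≤ C * √(|t - s| + |x - z|) := by
  obtain ⟨R, hR0, hR⟩ := D.proper T X
  have hK : IsCompact (Icc (-T) T ×ˢ Icc (-R) R) := isCompact_Icc.prod isCompact_Icc
  obtain ⟨K0, hK1⟩ := hK.exists_bound_of_continuousOn (Continuous.continuousOn D.gU_cont)
  obtain ⟨K0', hK1'⟩ := hK.exists_bound_of_continuousOn (Continuous.continuousOn D.P_cont)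
  set K := |K0|
  set K' := |K0'|
  have hE := D.E_nonneg
  have hKn : 0 ≤ K := abs_nonneg _
  have hKn' : 0 ≤ K' := abs_nonneg _
  refine ⟨K' * √(2 * |T|) + √(D.E * (K + 1)) + 1, by positivity, fun t x s z ht hx hs hz => ?_⟩
  set ξ := D.Z t x
  have hξ : |ξ| ≤ R := hR t ξ ht (by rw [D.y_Z]; exact hx)
  have hξ' : ξ ∈ Icc (-R) R := abs_le.1 hξ
  have ht' : t ∈ Icc (-T) T := abs_le.1 ht
  have hs' : s ∈ Icc (-T) T := abs_le.1 hs
  have h1 : |D.y s ξ - D.y t ξ| ≤ K * |s - t| := by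
    refine Convex.norm_image_sub_le_of_norm_hasDerivWithin_le (f := fun r => D.y r ξ) (s := Icc (-T) T)
      (fun r _ => (D.y_deriv r ξ).hasDerivWithinAt) (fun r hr => ?_) (convex_Icc _ _) ht' hs'
    exact (hK1 (r, ξ) ⟨hr, hξ'⟩).trans (le_abs_self _)
  have h2 : |D.U s ξ - D.U t ξ| ≤ K' * |s - t| := by
    refine Convex.norm_image_sub_le_of_norm_hasDerivWithin_le (f := fun r => D.U r ξ) (s := Icc (-T) T)
      (fun r _ => (D.U_deriv r ξ).hasDerivWithinAt) (fun r hr => ?_) (convex_Icc _ _) ht' hs'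
    have := (hK1' (r, ξ) ⟨hr, hξ'⟩).trans (le_abs_self _)
    rw [norm_mul, show ‖(1/2:ℝ)‖ = 1/2 by norm_num]
    simp only at this
    linarith [norm_nonneg (D.P r ξ)]
  rw [D.y_Z] at h1
  set δ := |t - s| + |x - z| with hδ
  have hst : |s - t| = |t - s| := abs_sub_comm _ _
  have hδ0 : 0 ≤ δ := by positivity
  have h3 : |D.u s (D.y s ξ) - D.u s z| ≤ √(D.E * (K + 1)) * √δ := by
    rw [← Real.sqrt_mul (by positivity)]
    refine Real.abs_le_sqrt ((D.u_sq s _ z).trans ?_)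
    rw [mul_assoc]
    refine mul_le_mul_of_nonneg_left ?_ hE
    have : |D.y s ξ - z| ≤ |D.y s ξ - x| + |x - z| := abs_sub_le _ _ _
    nlinarith [abs_nonneg (x - z), abs_nonneg (t - s)]
  have h4 : |t - s| ≤ √(2 * |T|) * √δ := by
    rw [← Real.sqrt_mul (by positivity)]
    refine Real.le_sqrt_of_sq_le ?_
    have h5 : |t - s| ≤ 2 * |T| := by
      have := abs_sub t s; linarith [le_abs_self T]
    have h6 : |t - s| ≤ δ := by rw [hδ]; linarith [abs_nonneg (x - z)]
    rw [sq]; gcongr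
  rw [D.u_y] at h3
  have h7 : D.u t x = D.U t ξ := rfl
  rw [h7]
  have h8 : |D.U t ξ - D.u s z| ≤ |D.U t ξ - D.U s ξ| + |D.U s ξ - D.u s z| := abs_sub_le _ _ _
  rw [abs_sub_comm (D.U t ξ) (D.U s ξ)] at h8
  have h9 : K' * |t - s| ≤ K' * (√(2 * |T|) * √δ) := by gcongr
  rw [hst] at h2
  nlinarith [Real.sqrt_nonneg δ]

lemma u_cont : C2 D.u := by
  rw [C2, continuous_iff_continuousAt]
  rintro ⟨t, x⟩
  obtain ⟨C, hC, h⟩ := D.holder (|t| + 1) (|x| + 1)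
  rw [ContinuousAt, tendsto_iff_dist_tendsto_zero]
  have hlim : Tendsto (fun p : ℝ × ℝ => C * √(|p.1 - t| + |p.2 - x|)) (𝓝 (t, x)) (𝓝 0) := by
    have : Continuous (fun p : ℝ × ℝ => C * √(|p.1 - t| + |p.2 - x|)) := by fun_prop
    have := this.tendsto (t, x)
    simpa using this
  refine squeeze_zero' (Eventually.of_forall fun _ => dist_nonneg) ?_ hlim
  have : Metric.ball (t, x) 1 ∈ 𝓝 (t, x) := Metric.ball_mem_nhds _ one_pos
  filter_upwards [this] with p hp
  rw [Metric.mem_ball, Prod.dist_eq, max_lt_iff, Real.dist_eq, Real.dist_eq] at hp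
  obtain ⟨hp1, hp2⟩ := hp
  rw [Real.dist_eq]
  have e1 := abs_sub_abs_le_abs_sub p.1 t
  have e2 := abs_sub_abs_le_abs_sub p.2 x
  simp only at hp1 hp2
  exact h _ _ _ _ (by linarith) (by linarith) (by linarith) (by linarith)

end Dat
end AVW

namespace AVW
open Filter Topology
namespace Dat
variable (D : Dat)

/-- Eulerian source term -/
noncomputable def Ph (t x : ℝ) : ℝ := D.P t (D.Z t x)

lemma C2m {h : ℝ → ℝ → ℝ} (hh : C2 h) : Measurable fun p : ℝ × ℝ => h p.1 (D.Z p.1 p.2) :=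
  (Continuous.measurable hh).comp (measurable_fst.prodMk D.Z_meas)

lemma Ph_meas : Measurable fun p : ℝ × ℝ => D.Ph p.1 p.2 := D.C2m D.P_cont

lemma ux_meas : Measurable fun p : ℝ × ℝ => D.ux p.1 p.2 :=
  (D.hw.comp D.Z_meas).div (D.a_meas.comp (measurable_fst.prodMk D.Z_meas))

/-- local boundedness in Eulerian coordinates -/
lemma C2b {h : ℝ → ℝ → ℝ} (hh : C2 h) (T X : ℝ) :
    ∃ B : ℝ, ∀ t x, |t| ≤ T → |x| ≤ X → |h t (D.Z t x)| ≤ B := by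
  obtain ⟨R, hR0, hR⟩ := D.proper T X
  have hK : IsCompact (Icc (-T) T ×ˢ Icc (-R) R) := isCompact_Icc.prod isCompact_Icc
  obtain ⟨K, hK1⟩ := hK.exists_bound_of_continuousOn (Continuous.continuousOn hh)
  exact ⟨K, fun t x ht hx => hK1 (t, D.Z t x) ⟨abs_le.1 ht, abs_le.1 (hR t _ ht (by rwa [D.y_Z]))⟩⟩

/-- primitive of `u` -/
noncomputable def Q (t x : ℝ) : ℝ := ∫ z in (D.g 0 * t)..x, D.u t z

lemma u_int (t a b : ℝ) : IntervalIntegrable (D.u t) volume a b :=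
  (D.u_cont.left t).intervalIntegrable _ _

lemma Um (t : ℝ) : Measurable (D.U t) := (D.U_cont.left t).measurable

lemma Q_y (t ξ : ℝ) : D.Q t (D.y t ξ) = D.Rr t ξ := by
  have h := D.cv t (D.Um t) 0 ξ
  rw [D.y_neg t le_rfl, zero_add] at h
  exact h

lemma Q_deriv (t x : ℝ) : HasDerivAt (fun s => D.Q s x)
    ((1/2) * D.N t (D.Z t x) - (D.f (D.u t x) - D.f 0)) t := by
  set ξ := D.Z t x with hξ
  have hx : D.y t ξ = x := D.y_Z t x
  have e : (fun s => D.Q s x) = fun s => D.Rr s ξ - ∫ z in (D.y t ξ)..(D.y s ξ), D.u s z := by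
    funext s
    rw [← D.Q_y, Q, Q, hx, intervalIntegral.integral_interval_sub_interval_comm' (D.u_int _ _ _) (D.u_int _ _ _) (D.u_int _ _ _)]
    simp only [intervalIntegral.integral_same, zero_sub]
    exact intervalIntegral.integral_symm _ _
  rw [e]
  have h := (D.Rr_deriv t ξ).sub (moving D.u_cont (D.y_deriv t ξ))
  convert! h using 1
  rw [D.u_y]
  have : D.u t x = D.U t ξ := rfl
  rw [this]; ring

lemma Q_eq (t x : ℝ) : D.Q t x - D.Q 0 x =
    ∫ s in (0:ℝ)..t, ((1/2) * D.N s (D.Z s x) - (D.f (D.u s x) - D.f 0)) := by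
  symm
  refine intervalIntegral.integral_eq_sub_of_hasDerivAt (f := fun s => D.Q s x) (fun s _ => D.Q_deriv s x) ?_
  refine IntervalIntegrable.sub (IntervalIntegrable.const_mul ?_ _) ?_
  · obtain ⟨B, hB⟩ := D.C2b D.N_cont |t| |x|
    refine (intervalIntegrable_const (c := B)).mono_fun'
      ((D.C2m D.N_cont).comp (measurable_id.prodMk measurable_const)).aestronglyMeasurable ?_
    refine (ae_restrict_iff' measurableSet_uIoc).2 (ae_of_all _ fun s hs => hB s x ?_ le_rfl)
    have := abs_sub_left_of_mem_uIcc (uIoc_subset_uIcc hs)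
    simpa using this
  · exact (((D.f_cont.comp (D.u_cont.right x)).sub continuous_const).intervalIntegrable _ _)

lemma Q_zero {t : ℝ} (ht : 0 ≤ t) (x : ℝ) : D.Q t x = ∫ z in (0:ℝ)..x, D.u t z := by
  have h := D.cv0 ht (D.Um t) (fun _ hη => D.U_neg t hη) ((D.poly_a2.mul D.U_cont).int t) x
  have h2 := D.Q_y t (D.Z t x)
  rw [D.y_Z] at h2
  rw [h2]; exact h.symm

lemma N_zero {t : ℝ} (ht : 0 ≤ t) (x : ℝ) : D.N t (D.Z t x) = ∫ z in (0:ℝ)..x, D.Ph t z :=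
  (D.cv0 ht (D.P_cont.left t).measurable (fun η hη => D.P_neg t hη) ((D.poly_a2.mul D.P_cont).int t) x).symm

lemma f_zero {t : ℝ} (ht : 0 ≤ t) (x : ℝ) :
    D.f (D.u t x) - D.f 0 = ∫ z in (0:ℝ)..x, D.g (D.u t z) * D.ux t z := by
  have e : ∀ η, D.g (D.U t η) * (D.w η / D.a t η) * D.a t η ^ 2 = D.g (D.U t η) * (D.w η * D.a t η) := by
    intro η; rw [mul_assoc, D.wdiv_mul]
  have h := D.cv0 ht (F := fun η => D.g (D.U t η) * (D.w η / D.a t η))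
    ((D.gU_cont.left t).measurable.mul (D.wdiv_meas t))
    (fun η hη => by rw [D.hw0 η hη, zero_div, mul_zero]) (fun c d => by
      simp_rw [e]; exact (D.poly_wa.mul D.gU_cont).int t c d) x
  simp_rw [e] at h
  rw [← D.U_chain D.hfg D.g_cont] at h
  exact h.symm

lemma Ph_int (t a b : ℝ) : IntervalIntegrable (D.Ph t) volume a b :=
  D.cvi t (D.P_cont.left t).measurable ((D.poly_a2.mul D.P_cont).int t) a b

lemma gux_int (t a b : ℝ) : IntervalIntegrable (fun z => D.g (D.u t z) * D.ux t z) volume a b :=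
  (D.ux_loc t a b).continuousOn_mul (D.g_cont.comp (D.u_cont.left t)).continuousOn

/-- the integrand of the equation -/
noncomputable def G (s z : ℝ) : ℝ := -(D.g (D.u s z)) * D.ux s z + (1/2) * D.Ph s z

lemma finm (a b : ℝ) : IsFiniteMeasure (volume.restrict (uIoc a b)) :=
  ⟨by rw [Measure.restrict_apply_univ]; exact measure_Ioc_lt_top⟩

lemma ux_sq_rect (t x : ℝ) : Integrable (fun p : ℝ × ℝ => D.ux p.1 p.2 ^ 2)
    ((volume.restrict (uIoc 0 t)).prod (volume.restrict (uIoc 0 x))) := by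
  have := finm 0 t
  have hm : AEStronglyMeasurable (fun p : ℝ × ℝ => D.ux p.1 p.2 ^ 2)
    ((volume.restrict (uIoc 0 t)).prod (volume.restrict (uIoc 0 x))) :=
    (D.ux_meas.pow_const 2).aestronglyMeasurable
  refine (integrable_prod_iff hm).2 ⟨ae_of_all _ fun s => (D.ux_sq_int s).integrableOn, ?_⟩
  refine Integrable.mono' (integrable_const D.E) hm.norm.integral_prod_right' (ae_of_all _ fun s => ?_)
  rw [Real.norm_of_nonneg (integral_nonneg fun z => norm_nonneg _)]
  simp_rw [Real.norm_of_nonneg (sq_nonneg _)]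
  exact (setIntegral_le_integral (D.ux_sq_int s) (ae_of_all _ fun z => sq_nonneg _)).trans (D.ux_sq_le s)

lemma G_rect (t x : ℝ) : Integrable (fun p : ℝ × ℝ => D.G p.1 p.2)
    ((volume.restrict (uIoc 0 t)).prod (volume.restrict (uIoc 0 x))) := by
  have := finm 0 t
  have := finm 0 x
  have hmem : ∀ᵐ p : ℝ × ℝ ∂((volume.restrict (uIoc 0 t)).prod (volume.restrict (uIoc 0 x))),
      |p.1| ≤ |t| ∧ |p.2| ≤ |x| := by
    rw [Measure.prod_restrict]
    refine (ae_restrict_iff' (measurableSet_uIoc.prod measurableSet_uIoc)).2 (ae_of_all _ fun p hp => ⟨?_, ?_⟩)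
    · simpa using abs_sub_left_of_mem_uIcc (uIoc_subset_uIcc hp.1)
    · simpa using abs_sub_left_of_mem_uIcc (uIoc_subset_uIcc hp.2)
  have h1 : Integrable (fun p : ℝ × ℝ => D.ux p.1 p.2)
      ((volume.restrict (uIoc 0 t)).prod (volume.restrict (uIoc 0 x))) := by
    refine Integrable.mono' ((integrable_const (1:ℝ)).add (D.ux_sq_rect t x)) D.ux_meas.aestronglyMeasurable
      (ae_of_all _ fun p => ?_)
    simp only [Pi.add_apply, Real.norm_eq_abs]
    rw [abs_le]
    constructor <;> nlinarith [sq_nonneg (D.ux p.1 p.2 - 1), sq_nonneg (D.ux p.1 p.2 + 1)]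
  obtain ⟨B, hB⟩ := D.C2b D.gU_cont |t| |x|
  obtain ⟨B', hB'⟩ := D.C2b D.P_cont |t| |x|
  refine Integrable.add ?_ (Integrable.const_mul ?_ _)
  · refine h1.bdd_mul (c := B) (D.C2m D.gU_cont).neg.aestronglyMeasurable ?_
    filter_upwards [hmem] with p hp
    rw [Real.norm_eq_abs, abs_neg]
    exact hB _ _ hp.1 hp.2
  · refine (integrable_const B').mono' D.Ph_meas.aestronglyMeasurable ?_
    filter_upwards [hmem] with p hp
    exact hB' _ _ hp.1 hp.2

lemma weak {t : ℝ} (ht : 0 ≤ t) : ∀ᵐ x ∂(volume.restrict (Ici (0:ℝ))),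
    D.u t x = D.ub x + ∫ s in (0:ℝ)..t, D.G s x := by
  have hGi : ∀ x, 0 ≤ x → IntervalIntegrable (fun z => ∫ s in (0:ℝ)..t, D.G s z) volume 0 x := by
    intro x _
    rw [intervalIntegrable_iff]
    have := (D.G_rect t x).integral_prod_right
    simp_rw [intervalIntegral.integral_of_le ht]
    rwa [uIoc_of_le ht] at this
  have key := ae_zero (D := fun x => D.u t x - D.ub x - ∫ s in (0:ℝ)..t, D.G s x)
    (fun x hx => ((D.u_int t 0 x).sub (D.ub_cont.intervalIntegrable _ _)).sub (hGi x hx)) (fun x hx => by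
      rw [intervalIntegral.integral_sub ((D.u_int t 0 x).sub (D.ub_cont.intervalIntegrable _ _)) (hGi x hx),
        intervalIntegral.integral_sub (D.u_int t 0 x) (D.ub_cont.intervalIntegrable _ _),
        ← D.Q_zero ht]
      have h0 : ∫ z in (0:ℝ)..x, D.ub z = D.Q 0 x := by
        rw [D.Q_zero le_rfl]; simp_rw [D.u_init]
      rw [h0, D.Q_eq]
      have hsw : ∫ z in (0:ℝ)..x, ∫ s in (0:ℝ)..t, D.G s z = ∫ s in (0:ℝ)..t, ∫ z in (0:ℝ)..x, D.G s z := by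
        refine (intervalIntegral_intervalIntegral_swap ?_).symm
        rw [IntegrableOn, Measure.volume_eq_prod, ← Measure.prod_restrict]
        exact D.G_rect t x
      rw [hsw, sub_eq_zero]
      refine intervalIntegral.integral_congr fun s hs => ?_
      rw [uIcc_of_le ht] at hs
      rw [D.N_zero hs.1, D.f_zero hs.1]
      unfold G
      simp_rw [neg_mul]
      have hn : IntervalIntegrable (fun z => -(D.g (D.u s z) * D.ux s z)) volume 0 x := (D.gux_int s 0 x).neg
      rw [intervalIntegral.integral_add hn ((D.Ph_int s 0 x).const_mul _),
        intervalIntegral.integral_neg, intervalIntegral.integral_const_mul]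
      ring)
  filter_upwards [key] with x hx
  linarith

lemma src_eq : ∀ᵐ s : ℝ, 0 ≤ s → ∀ x, D.Ph s x = ∫ z in (0:ℝ)..x, D.k (D.u s z) * D.ux s z ^ 2 := by
  have h1 : ∀ᵐ s : ℝ, ∀ᵐ η : ℝ, ¬ (D.a s η = 0 ∧ (1/2) * D.w η * D.k (D.U s η) ≠ 0) := by
    rw [Measure.ae_ae_comm]
    · refine ae_of_all _ fun η => ?_
      have := null_zeros (fun s => D.a_deriv s η)
      rw [ae_iff]
      simpa only [not_not] using this
    · have m1 : MeasurableSet {p : ℝ × ℝ | D.a p.1 p.2 = 0} := D.a_meas (measurableSet_singleton 0)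
      have m2 : MeasurableSet {p : ℝ × ℝ | (1/2) * D.w p.2 * D.k (D.U p.1 p.2) = 0} := by
        have : Measurable fun p : ℝ × ℝ => (1/2) * D.w p.2 * D.k (D.U p.1 p.2) :=
          ((D.hw.comp measurable_snd).const_mul _).mul (Continuous.measurable D.kU_cont)
        exact this (measurableSet_singleton 0)
      exact (m1.inter m2.compl).compl
  filter_upwards [h1] with s hs hs0 x
  have e : ∀ᵐ η : ℝ, D.k (D.U s η) * (D.w η / D.a s η) ^ 2 * D.a s η ^ 2 = D.k (D.U s η) * D.w η ^ 2 := by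
    filter_upwards [hs] with η hη
    by_cases ha : D.a s η = 0
    · have hz : (1/2) * D.w η * D.k (D.U s η) = 0 := by
        by_contra hne; exact hη ⟨ha, hne⟩
      rw [ha]
      have : D.k (D.U s η) * D.w η ^ 2 = 2 * D.w η * ((1/2) * D.w η * D.k (D.U s η)) := by ring
      rw [this, hz]; simp
    · field_simp
  have h := D.cv0 hs0 (F := fun η => D.k (D.U s η) * (D.w η / D.a s η) ^ 2)
    ((D.kU_cont.left s).measurable.mul ((D.wdiv_meas s).pow_const 2))
    (fun η hη => by rw [D.hw0 η hη, zero_div]; simp) (fun c d => by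
      refine ((D.poly_w2.mul D.kU_cont).int s c d).congr_ae ?_
      filter_upwards [ae_restrict_of_ae e] with η hη using hη.symm) x
  have h2 : ∫ η in (0:ℝ)..(D.Z s x), D.k (D.U s η) * (D.w η / D.a s η) ^ 2 * D.a s η ^ 2 = D.Ph s x :=
    intervalIntegral.integral_congr_ae (e.mono fun η hη _ => hη)
  rw [← h2]; exact h.symm

lemma eqn {t : ℝ} (ht : 0 ≤ t) : ∀ᵐ x ∂(volume.restrict (Ici (0:ℝ))),
    D.u t x = D.ub x + ∫ s in (0:ℝ)..t, (-(D.g (D.u s x)) * D.ux s x +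
      (1/2) * ∫ z in (0:ℝ)..x, D.k (D.u s z) * D.ux s z ^ 2) := by
  filter_upwards [D.weak ht] with x hx
  rw [hx]
  congr 1
  refine intervalIntegral.integral_congr_ae ?_
  filter_upwards [D.src_eq] with s hs hs1
  rw [uIoc_of_le ht] at hs1
  unfold G
  rw [hs hs1.1.le x]

end Dat
end AVW

namespace AVW
open Filter Topology

lemma exists_dat (f : ℝ → ℝ) (hf : ContDiff ℝ 2 f) (hf0 : 0 ≤ deriv f 0)
    (L : NNReal) (hfLip : LipschitzWith L (deriv (deriv f)))
    (ubar ubar' : ℝ → ℝ)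
    (hubar'loc : ∀ x : ℝ, 0 ≤ x → IntervalIntegrable ubar' volume 0 x)
    (hubar : ∀ x : ℝ, 0 ≤ x → ubar x = ∫ y in (0:ℝ)..x, ubar' y)
    (hubar'L2 : IntegrableOn (fun x => (ubar' x) ^ 2) (Set.Ici 0)) :
    ∃ D : Dat, D.f = f ∧ D.g = deriv f ∧ D.k = deriv (deriv f) ∧ (∀ x, 0 ≤ x → D.ub x = ubar x) ∧
      D.E = ∫ x in Set.Ici (0:ℝ), (ubar' x) ^ 2 := by
  have hm : AEStronglyMeasurable ubar' (volume.restrict (Ioi (0:ℝ))) := by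
    have e : Ioi (0:ℝ) = ⋃ n : ℕ, Ioc (0:ℝ) n := by
      ext x
      simp only [mem_Ioi, mem_iUnion, mem_Ioc, exists_and_left, iff_self_and]
      intro _; exact exists_nat_ge x
    rw [e, aestronglyMeasurable_iUnion_iff]
    intro n
    exact ((intervalIntegrable_iff_integrableOn_Ioc_of_le (Nat.cast_nonneg n)).1
      (hubar'loc n (Nat.cast_nonneg n))).aestronglyMeasurable
  set v := hm.mk ubar' with hv
  have hvm : Measurable v := hm.stronglyMeasurable_mk.measurable
  have heq : ubar' =ᵐ[volume.restrict (Ioi (0:ℝ))] v := hm.ae_eq_mk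
  set w : ℝ → ℝ := (Ioi (0:ℝ)).indicator v with hw
  have hw2 : (fun x => w x ^ 2) = (Ioi (0:ℝ)).indicator (fun x => v x ^ 2) := by
    funext x
    by_cases h : x ∈ Ioi (0:ℝ)
    · simp [hw, h]
    · simp [hw, h]
  have hd2 : ContDiff ℝ 1 (deriv f) := by
    have : ContDiff ℝ (1 + 1) f := by simpa [one_add_one_eq_two] using hf
    exact (contDiff_succ_iff_deriv.1 this).2.2
  have heq2 : (fun x => ubar' x ^ 2) =ᵐ[volume.restrict (Ioi (0:ℝ))] fun x => v x ^ 2 := by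
    filter_upwards [heq] with x hx
    rw [hx]
  let D : Dat :=
    { f := f, g := deriv f, k := deriv (deriv f), w := w, L := L
      hfg := fun x => (hf.differentiable (by norm_num) x).hasDerivAt
      hgk := fun x => (hd2.differentiable (by norm_num) x).hasDerivAt
      hk := hfLip
      hg0 := hf0
      hw := hvm.indicator measurableSet_Ioi
      hw0 := fun x hx => indicator_of_notMem (by simpa using hx) _
      hw2 := by
        rw [hw2, integrable_indicator_iff measurableSet_Ioi]
        exact (hubar'L2.mono_set Ioi_subset_Ici_self).congr heq2 }
  refine ⟨D, rfl, rfl, rfl, fun x hx => ?_, ?_⟩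
  · rw [hubar x hx]
    show ∫ y in (0:ℝ)..x, w y = _
    rw [intervalIntegral.integral_of_le hx, intervalIntegral.integral_of_le hx]
    refine integral_congr_ae ?_
    have h1 := ae_restrict_of_ae_restrict_of_subset (show Ioc (0:ℝ) x ⊆ Ioi 0 from fun z hz => hz.1) heq
    filter_upwards [h1, ae_restrict_mem measurableSet_Ioc] with z hz hz0
    rw [hz, hw, indicator_of_mem (show z ∈ Ioi (0:ℝ) from hz0.1)]
  · show ∫ x, w x ^ 2 = _
    rw [hw2, integral_indicator measurableSet_Ioi, integral_Ici_eq_integral_Ioi]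
    exact (integral_congr_ae heq2).symm

end AVW

/-- Global existence of a solution of the integrated asymptotic variational wave
equation `u_t + f(u)_x = (1/2)∫₀^x f''(u)u_x² dy` on the quarter plane, with zero
boundary data at `x = 0`, for a flux `f` with `f'(0) ≥ 0` and Lipschitz `f''`,
and finite-energy absolutely continuous initial data `ū`.

Absolutely continuous functions are encoded through their derivatives via the
fundamental theorem of calculus; local Hölder continuity is expressed on bounded
subsets of the quarter plane. -/
theorem stmt18 (f : ℝ → ℝ) (hf : ContDiff ℝ 2 f) (hf0 : 0 ≤ deriv f 0)
    (L : NNReal) (hfLip : LipschitzWith L (deriv (deriv f)))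
    (ubar ubar' : ℝ → ℝ)
    (hubar0 : ubar 0 = 0)
    (hubar'loc : ∀ x : ℝ, 0 ≤ x → IntervalIntegrable ubar' volume 0 x)
    (hubar : ∀ x : ℝ, 0 ≤ x → ubar x = ∫ y in (0:ℝ)..x, ubar' y)
    (hubar'L2 : IntegrableOn (fun x => (ubar' x) ^ 2) (Set.Ici 0)) :
    ∃ u ux : ℝ → ℝ → ℝ,
      -- (a) local Hölder continuity in (t,x)
      (∀ S : Set (ℝ × ℝ), Bornology.IsBounded S → ∃ C α : ℝ, 0 < C ∧ 0 < α ∧ α ≤ 1 ∧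
        ∀ t x s y : ℝ, (t, x) ∈ S → (s, y) ∈ S → 0 ≤ t → 0 ≤ x → 0 ≤ s → 0 ≤ y →
          |u t x - u s y| ≤ C * (|t - s| + |x - y|) ^ α) ∧
      -- (b) initial and boundary conditions
      (∀ x : ℝ, 0 ≤ x → u 0 x = ubar x) ∧
      (∀ t : ℝ, 0 ≤ t → u t 0 = 0) ∧
      -- (c) absolute continuity in x with nonincreasing energy
      (∀ t : ℝ, 0 ≤ t →
        (∀ x : ℝ, 0 ≤ x → IntervalIntegrable (ux t) volume 0 x ∧
          u t x = ∫ y in (0:ℝ)..x, ux t y) ∧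
        IntegrableOn (fun x => (ux t x) ^ 2) (Set.Ici 0) ∧
        ∫ x in Set.Ici (0:ℝ), (ux t x) ^ 2 ≤ ∫ x in Set.Ici (0:ℝ), (ubar' x) ^ 2) ∧
      -- (d) the integrated equation
      (∀ t : ℝ, 0 ≤ t → ∀ᵐ x ∂(volume.restrict (Set.Ici 0)),
        u t x = ubar x + ∫ s in (0:ℝ)..t,
          (-(deriv f (u s x)) * ux s x +
            (1 / 2) * ∫ y in (0:ℝ)..x, deriv (deriv f) (u s y) * (ux s y) ^ 2)) := by
  obtain ⟨D, hDf, hDg, hDk, hDub, hDE⟩ := AVW.exists_dat f hf hf0 L hfLip ubar ubar' hubar'loc hubar hubar'L2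
  subst hDf
  refine ⟨D.u, D.ux, ?_, ?_, ?_, ?_, ?_⟩
  · intro S hS
    obtain ⟨R, hR⟩ := hS.subset_closedBall (0 : ℝ × ℝ)
    obtain ⟨C, hC, h⟩ := D.holder R R
    have hb : ∀ t x : ℝ, (t, x) ∈ S → |t| ≤ R ∧ |x| ≤ R := by
      intro t x h1
      have h2 := hR h1
      rw [Metric.mem_closedBall, dist_zero_right, Prod.norm_def, max_le_iff] at h2
      exact h2
    refine ⟨C, 1/2, hC, by norm_num, by norm_num, fun t x s y h1 h2 _ _ _ _ => ?_⟩
    rw [← Real.sqrt_eq_rpow]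
    exact h t x s y (hb _ _ h1).1 (hb _ _ h1).2 (hb _ _ h2).1 (hb _ _ h2).2
  · intro x hx
    rw [D.u_init, hDub x hx]
  · intro t ht
    exact D.u_zero ht
  · intro t ht
    refine ⟨fun x _ => ⟨D.ux_loc t 0 x, D.u_eq ht x⟩, (D.ux_sq_int t).integrableOn, ?_⟩
    rw [← hDE]
    exact (setIntegral_le_integral (D.ux_sq_int t) (ae_of_all _ fun z => sq_nonneg _)).trans (D.ux_sq_le t)
  · intro t ht
    filter_upwards [D.eqn ht, ae_restrict_mem measurableSet_Ici] with x hx hx0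
    rw [← hDk, ← hDg, ← hDub x hx0]
    exact hx
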